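/- arXiv:2212.06802 — 3 statements merged into one kernel-verified Lean document; each statement's English description precedes it below -/
import Mathlib

section
/- There exist constants C > 0 and δ > 0 such that the following holds for all integers r, s, k with r > s ≥ 1. Set ε = (r − s)/r. If s ≤ r − C·log r and k ≥ (C/ε)·log r, then R_{r,s}(k) ≥ exp(δ·k·(r−s)²/r). -/
/-- `HasSetColouringRamsey r s k n` says that every colouring assigning to each
edge of the complete graph on `n` vertices a set of `s` colours from `{1,…,r}`
contains a monochromatic clique of size `k`. -/
def HasSetColouringRamsey (r s k n : ℕ) : Prop :=
  ∀ χ : Fin n → Fin n → Finset (Fin r),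
    (∀ u v, χ u v = χ v u) →
    (∀ u v, u ≠ v → (χ u v).card = s) →
    ∃ (S : Finset (Fin n)) (i : Fin r), S.card = k ∧
      ∀ u ∈ S, ∀ v ∈ S, u ≠ v → i ∈ χ u v

/-- The set-colouring Ramsey number `R_{r,s}(k)`. -/
noncomputable def setRamsey (r s k : ℕ) : ℕ :=
  sInf {n | HasSetColouringRamsey r s k n}

/-!
Put `d = r - s` and `E = d * k / r`. For each colour `i` take a random map `φ i` from the `n`
vertices to `m = exp (Θ(E))` points, and a random set `M i` of marked edges among these points, of
density `1 / q ≈ d / (8 * r)`. Give every edge `e` a set of `s` colours `i` for which `φ i`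
separates the ends of `e`, chosen so that `φ i` sends `e` to unmarked edges whenever at least `s`
colours have both properties.

If a `k`-set `S` is a clique in colour `i`, then `φ i` is injective on `S`. Every `k`-set of
points spans more than `j ≈ k * E / 100` marked edges, and those in the image of `S` come from
edges for which fewer than `s` colours have both properties. So some `j` edges of `S` lose at
least `d` colours each. This is impossible. Collisions cost few colours, since by a union bound
over vertex sets the maps have few collisions in total on every set of at most `k` vertices, and
marks cost few colours, since for given maps each family of `j` edges meets about `r * j / q`
marks.

Ramsey's theorem shows that `setRamsey r s k` is attained, rather than the junk value
`sInf ∅ = 0`.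
-/

namespace SetColouring

open Finset Real
open scoped BigOperators

variable {ι V U : Type*}

section Ramsey

theorem exists_le_card_filter_adj [Fintype ι] {G : ι → SimpleGraph V} (hG : ⨆ i, G i = ⊤)
    [∀ i, DecidableRel (G i).Adj] [DecidableEq V] {A : Finset V} {v : V} {N : ι → ℕ}
    (hA : ∑ i, N i < #(A.erase v)) :
    ∃ i, N i ≤ #{u ∈ A.erase v | (G i).Adj v u} := by
  by_contra! hsmall
  have hcover : A.erase v ⊆ univ.biUnion fun i => {u ∈ A.erase v | (G i).Adj v u} := by
    intro u hu
    have hadj : (⨆ i, G i).Adj v u := by rw [hG]; exact (ne_of_mem_erase hu).symm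
    obtain ⟨i, hi⟩ := SimpleGraph.iSup_adj.1 hadj
    exact mem_biUnion.2 ⟨i, mem_univ i, mem_filter.2 ⟨hu, hi⟩⟩
  exact hA.not_ge <| (card_le_card hcover).trans <|
    card_biUnion_le.trans (sum_le_sum fun i _ => (hsmall i).le)

theorem exists_isNClique_of_iSup_eq_top [Finite ι] (a : ι → ℕ) :
    ∃ N, ∀ {V : Type*} (G : ι → SimpleGraph V), ⨆ i, G i = ⊤ → ∀ A : Finset V, N ≤ #A →
      ∃ i, ∃ S ⊆ A, (G i).IsNClique (a i) S := by
  classical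
  have := Fintype.ofFinite ι
  induction a using WellFoundedLT.induction with
  | _ a ih =>
    by_cases h0 : ∃ i, a i = 0
    · obtain ⟨i, hi⟩ := h0
      exact ⟨0, fun G _ A _ => ⟨i, ∅, empty_subset A, by simp [hi]⟩⟩
    have ha : ∀ i, 0 < a i := fun i => Nat.pos_of_ne_zero fun h => h0 ⟨i, h⟩
    choose N hN using fun i =>
      ih (Function.update a i (a i - 1)) (update_lt_self_iff.2 (Nat.sub_lt (ha i) one_pos))
    refine ⟨∑ i, N i + 2, fun {V} G hG A hA => ?_⟩
    obtain ⟨v, hv⟩ : A.Nonempty := card_pos.1 (by lia)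
    obtain ⟨i, hi⟩ := exists_le_card_filter_adj (v := v) (N := N) hG
      (by rw [card_erase_of_mem hv]; lia)
    obtain ⟨j, S, hSsub, hS⟩ := hN i G hG _ hi
    have hSA : S ⊆ A := hSsub.trans ((filter_subset _ _).trans (erase_subset v A))
    obtain rfl | hij := eq_or_ne j i
    · refine ⟨j, insert v S, insert_subset hv hSA, ?_⟩
      rw [Function.update_self] at hS
      have hvS := hS.insert fun u hu => (mem_filter.1 (hSsub hu)).2
      rwa [Nat.sub_add_cancel (Nat.one_le_iff_ne_zero.2 (ha j).ne')] at hvS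
    · exact ⟨j, S, hSA, by rwa [Function.update_of_ne hij] at hS⟩

end Ramsey

section Expectation

theorem expect_prod_apply {κ : ι → Type*} {K : Type*} [Fintype ι] [DecidableEq ι]
    [∀ i, Fintype (κ i)] [Semifield K] [CharZero K] (F : ∀ i, κ i → K) :
    𝔼 g : ∀ i, κ i, ∏ i, F i (g i) = ∏ i, 𝔼 x, F i x := by
  simp only [Fintype.expect_eq_sum_div_card, prod_div_distrib, prod_univ_sum,
    Fintype.piFinset_univ, Fintype.card_pi, Nat.cast_prod]

theorem expect_expect_update {M : Type*} [Fintype V] [DecidableEq V] [Fintype U] [AddCommMonoid M]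
    [Module ℚ≥0 M] (a : V) (H : (V → U) → M) :
    𝔼 f, 𝔼 x, H (Function.update f a x) = 𝔼 f, H f := by
  have hswap : Function.Involutive
      fun p : (V → U) × U => (Function.update p.1 a p.2, p.1 a) := fun p => by simp
  calc 𝔼 f, 𝔼 x, H (Function.update f a x)
      = 𝔼 p : (V → U) × U, H (Function.update p.1 a p.2) := (expect_product' _ _ _).symm
    _ = 𝔼 p : (V → U) × U, H p.1 := Fintype.expect_equiv hswap.toPerm _ _ fun _ => rfl
    _ = 𝔼 f : V → U, 𝔼 _x : U, H f := expect_product' univ univ fun f _ => H f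
    _ = 𝔼 f, H f := expect_congr rfl fun f _ =>
        have : Nonempty U := ⟨f a⟩
        Fintype.expect_const _

theorem expect_exp_card_filter_eq_le [Fintype V] [DecidableEq V] [Fintype U] [DecidableEq U]
    (c : U) (t : ℝ) (A : Finset V) :
    𝔼 g : V → U, exp (t * #{a ∈ A | g a = c}) ≤ exp ((exp t - 1) / Fintype.card U) ^ #A := by
  have : Nonempty U := ⟨c⟩
  have hprod (g : V → U) : exp (t * #{a ∈ A | g a = c}) =
      ∏ a, if a ∈ A then (if g a = c then exp t else 1) else 1 := by
    rw [Fintype.prod_ite_mem, ← prod_filter, prod_const, ← exp_nat_mul, mul_comm]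
  have hfactor : 𝔼 x : U, (if x = c then exp t else 1) = (exp t - 1) / Fintype.card U + 1 := by
    have hsplit (x : U) : (if x = c then exp t else 1) = (if x = c then exp t - 1 else 0) + 1 := by
      split_ifs <;> ring
    simp only [hsplit, Fintype.expect_eq_sum_div_card, sum_add_distrib, sum_ite_eq', mem_univ,
      if_true, sum_const, card_univ, nsmul_eq_mul, mul_one]
    field_simp
  calc 𝔼 g : V → U, exp (t * #{a ∈ A | g a = c})
      = ∏ a, 𝔼 x : U, if a ∈ A then (if x = c then exp t else 1) else 1 := by
        simp only [hprod]
        exact expect_prod_apply fun a x => if a ∈ A then (if x = c then exp t else 1) else 1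
    _ = ∏ a, if a ∈ A then 𝔼 x : U, (if x = c then exp t else 1) else 1 :=
        prod_congr rfl fun a _ => by split_ifs <;> simp
    _ = ((exp t - 1) / Fintype.card U + 1) ^ #A := by
        rw [Fintype.prod_ite_mem, prod_const, hfactor]
    _ ≤ exp ((exp t - 1) / Fintype.card U) ^ #A := by
        refine pow_le_pow_left₀ ?_ (add_one_le_exp _) _
        rw [← hfactor]
        exact expect_nonneg fun x _ => by split_ifs <;> positivity

theorem expect_exp_card_filter_sub_le [Fintype V] [DecidableEq V] [Fintype U] [DecidableEq U]
    (c : U) (y : ℝ) {a : ℝ} {A : Finset V} (hA : #A ≤ a) :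
    𝔼 g : V → U, exp (#{v ∈ A | g v = c} - y) ≤ exp (2 * a / Fintype.card U - y) := by
  have hmgf := expect_exp_card_filter_eq_le c 1 A
  simp only [one_mul] at hmgf
  simp only [sub_eq_add_neg _ y, exp_add, ← expect_mul]
  gcongr
  calc 𝔼 g : V → U, exp #{v ∈ A | g v = c}
      ≤ exp (#A * ((exp 1 - 1) / Fintype.card U)) := by rwa [exp_nat_mul]
    _ ≤ exp (#A * (2 / Fintype.card U)) := by
        have := exp_one_lt_three
        gcongr
        linarith
    _ ≤ exp (a * (2 / Fintype.card U)) := by gcongr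
    _ = exp (2 * a / Fintype.card U) := by ring_nf

theorem expect_exp_sub_card_filter_le [Fintype V] [DecidableEq V] [Fintype U] [DecidableEq U]
    (c : U) (x : ℝ) {b : ℝ} {T : Finset V} (hT : b ≤ #T) :
    𝔼 g : V → U, exp (x - #{v ∈ T | g v = c}) ≤ exp (x - b / (2 * Fintype.card U)) := by
  have hmgf := expect_exp_card_filter_eq_le c (-1) T
  simp only [neg_one_mul] at hmgf
  simp only [sub_eq_add_neg x, exp_add, ← mul_expect]
  gcongr
  have hinv : exp (-1) - 1 ≤ -(1 / 2) := by
    rw [exp_neg]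
    have : (exp 1)⁻¹ ≤ 2⁻¹ := by gcongr; exact exp_one_gt_two.le
    linarith
  calc 𝔼 g : V → U, exp (-#{v ∈ T | g v = c})
      ≤ exp ((exp (-1) - 1) / Fintype.card U) ^ #T := hmgf
    _ ≤ exp (-(1 / 2) / Fintype.card U) ^ #T := by gcongr
    _ = exp (-(#T / (2 * Fintype.card U))) := by rw [← exp_nat_mul]; ring_nf
    _ ≤ exp (-(b / (2 * Fintype.card U))) := by gcongr

theorem exists_finset_card_inter_bounds [Finite V] [DecidableEq V] (q : ℕ) [NeZero q]
    {𝒜 𝒯 : Finset (Finset V)} {a b x y : ℝ} (h𝒜 : ∀ A ∈ 𝒜, #A ≤ a) (h𝒯 : ∀ T ∈ 𝒯, b ≤ #T)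
    (h : #𝒜 * exp (2 * a / q - y) + #𝒯 * exp (x - b / (2 * q)) < 1) :
    ∃ M : Finset V, (∀ A ∈ 𝒜, #(A ∩ M) < y) ∧ ∀ T ∈ 𝒯, x < #(T ∩ M) := by
  have := Fintype.ofFinite V
  let excess (g : V → Fin q) (A : Finset V) : ℝ := exp (#{v ∈ A | g v = 0} - y)
  let deficit (g : V → Fin q) (T : Finset V) : ℝ := exp (x - #{v ∈ T | g v = 0})
  obtain ⟨g, -, hg⟩ : ∃ g ∈ (univ : Finset (V → Fin q)),
      ∑ A ∈ 𝒜, excess g A + ∑ T ∈ 𝒯, deficit g T < 1 := by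
    refine exists_lt_of_expect_lt univ_nonempty (lt_of_le_of_lt ?_ h)
    rw [expect_add_distrib, expect_sum_comm, expect_sum_comm, ← nsmul_eq_mul, ← nsmul_eq_mul]
    refine add_le_add (sum_le_card_nsmul _ _ _ fun A hA => ?_)
      (sum_le_card_nsmul _ _ _ fun T hT => ?_)
    · simpa using expect_exp_card_filter_sub_le (0 : Fin q) y (h𝒜 A hA)
    · simpa using expect_exp_sub_card_filter_le (0 : Fin q) x (h𝒯 T hT)
  have hexcess : ∀ A, 0 < excess g A := fun A => exp_pos _
  have hdeficit : ∀ T, 0 < deficit g T := fun T => exp_pos _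
  refine ⟨univ.filter (g · = 0), fun A hA => ?_, fun T hT => ?_⟩ <;>
    rw [inter_filter, inter_univ]
  · have hA1 := single_le_sum (fun A _ => (hexcess A).le) hA
    have hT0 := sum_nonneg fun T (_ : T ∈ 𝒯) => (hdeficit T).le
    exact sub_neg.1 (exp_lt_one_iff.1 ((le_add_of_le_of_nonneg hA1 hT0).trans_lt hg))
  · have hT1 := single_le_sum (fun T _ => (hdeficit T).le) hT
    have hA0 := sum_nonneg fun A (_ : A ∈ 𝒜) => (hexcess A).le
    exact sub_neg.1 (exp_lt_one_iff.1 ((le_add_of_nonneg_of_le hA0 hT1).trans_lt hg))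

end Expectation

section Collisions

/-- The number of vertices of `W` lost to collisions under `f`. The subtraction never truncates;
see `card_image_add_collisions`. -/
def collisions [DecidableEq U] (f : V → U) (W : Finset V) : ℕ :=
  #W - #(W.image f)

theorem card_image_add_collisions [DecidableEq U] (f : V → U) (W : Finset V) :
    #(W.image f) + collisions f W = #W :=
  Nat.add_sub_cancel' card_image_le

theorem collisions_congr [DecidableEq U] {f g : V → U} {W : Finset V} (h : ∀ v ∈ W, f v = g v) :
    collisions f W = collisions g W := by
  rw [collisions, collisions, image_congr h]

theorem collisions_insert [DecidableEq V] [DecidableEq U] (f : V → U) {W : Finset V} {a : V}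
    (ha : a ∉ W) :
    collisions f (insert a W) = collisions f W + if f a ∈ W.image f then 1 else 0 := by
  have hW := card_image_add_collisions f W
  have haW := card_image_add_collisions f (insert a W)
  rw [image_insert, card_insert_of_notMem ha] at haW
  split_ifs with h
  · rw [insert_eq_of_mem h] at haW
    lia
  · rw [card_insert_of_notMem h] at haW
    lia

theorem expect_exp_collisions_le [Fintype V] [DecidableEq V] [Fintype U] [Nonempty U]
    [DecidableEq U] (t : ℝ) {W : Finset V} {w : ℕ} (hW : #W ≤ w) :
    𝔼 f : V → U, exp (t * collisions f W) ≤ exp (w * exp t / Fintype.card U) ^ #W := by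
  induction W using Finset.induction_on with
  | empty => simp [collisions]
  | insert a W ha ih =>
    rw [card_insert_of_notMem ha] at hW ⊢
    have hstep (f : V → U) (x : U) :
        exp (t * collisions (Function.update f a x) (insert a W)) ≤
          exp (t * collisions f W) * (1 + if x ∈ W.image f then exp t else 0) := by
      have hagree : ∀ v ∈ W, Function.update f a x v = f v :=
        fun v hv => Function.update_of_ne (ne_of_mem_of_not_mem hv ha) _ _
      rw [collisions_insert _ ha, collisions_congr hagree, image_congr hagree,
        Function.update_self, Nat.cast_add, mul_add, exp_add]
      gcongr
      split_ifs <;> simp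
    have haverage (f : V → U) :
        𝔼 x : U, (1 + if x ∈ W.image f then exp t else 0) ≤ exp (w * exp t / Fintype.card U) := by
      calc 𝔼 x : U, (1 + if x ∈ W.image f then exp t else 0)
          = #(W.image f) * exp t / Fintype.card U + 1 := by
            rw [expect_add_distrib, Fintype.expect_const, Fintype.expect_eq_sum_div_card,
              sum_ite_mem, univ_inter, sum_const, nsmul_eq_mul, add_comm]
        _ ≤ w * exp t / Fintype.card U + 1 := by
            gcongr
            exact card_image_le.trans (by lia)
        _ ≤ exp (w * exp t / Fintype.card U) := add_one_le_exp _
    calc 𝔼 f : V → U, exp (t * collisions f (insert a W))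
        = 𝔼 f : V → U, 𝔼 x : U, exp (t * collisions (Function.update f a x) (insert a W)) :=
          (expect_expect_update a fun f => exp (t * collisions f (insert a W))).symm
      _ ≤ 𝔼 f : V → U, exp (t * collisions f W) * exp (w * exp t / Fintype.card U) := by
          refine expect_le_expect fun f _ => ?_
          refine (expect_le_expect fun x _ => hstep f x).trans ?_
          rw [← mul_expect]
          gcongr
          exact haverage f
      _ ≤ exp (w * exp t / Fintype.card U) ^ (#W + 1) := by
          rw [← expect_mul, pow_succ]
          gcongr
          exact ih (by lia)

/-- A family `φ` of maps is nearly injective on sets of size at most `k`, with defect `c`, if the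
total number of collisions of its members on each such set `W` is at most `c * #W`. -/
def NearlyInjective [Fintype ι] [DecidableEq U] (φ : ι → V → U) (k : ℕ) (c : ℝ) : Prop :=
  ∀ W : Finset V, #W ≤ k → ∑ i, (collisions (φ i) W : ℝ) ≤ c * #W

theorem expect_exp_sum_collisions_sub_le [Fintype ι] [DecidableEq ι] [Fintype V] [DecidableEq V]
    [Fintype U] [Nonempty U] [DecidableEq U] {t : ℝ} (c : ℝ) {k : ℕ}
    (hk : k * Fintype.card ι * exp t ≤ Fintype.card U) {W : Finset V} (hW : #W ≤ k) :
    𝔼 φ : ι → V → U, exp (t * (∑ i, (collisions (φ i) W : ℝ) - c * #W)) ≤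
      exp (1 - t * c) ^ #W := by
  have hsplit (φ : ι → V → U) : exp (t * (∑ i, (collisions (φ i) W : ℝ) - c * #W)) =
      (∏ i, exp (t * collisions (φ i) W)) * exp (-(t * c) * #W) := by
    rw [← exp_sum, ← mul_sum, ← exp_add]
    ring_nf
  have hk' : Fintype.card ι * (k * exp t / Fintype.card U) ≤ 1 := by
    rw [mul_div_assoc']
    exact div_le_one_of_le₀ (by linarith) (Nat.cast_nonneg _)
  calc 𝔼 φ : ι → V → U, exp (t * (∑ i, (collisions (φ i) W : ℝ) - c * #W))
      = (𝔼 f : V → U, exp (t * collisions f W)) ^ Fintype.card ι * exp (-(t * c) * #W) := by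
        simp only [hsplit]
        rw [← expect_mul, expect_prod_apply fun _ f => exp (t * collisions f W), prod_const,
          card_univ]
    _ ≤ (exp (k * exp t / Fintype.card U) ^ #W) ^ Fintype.card ι * exp (-(t * c) * #W) := by
        gcongr
        exact expect_exp_collisions_le t hW
    _ = exp (Fintype.card ι * (k * exp t / Fintype.card U)) ^ #W * exp (-(t * c) * #W) := by
        rw [← pow_mul, mul_comm #W, pow_mul, ← exp_nat_mul]
    _ ≤ exp 1 ^ #W * exp (-(t * c)) ^ #W := by
        rw [mul_comm (-(t * c)), exp_nat_mul _ #W]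
        gcongr
    _ = exp (1 - t * c) ^ #W := by rw [← mul_pow, ← exp_add, sub_eq_add_neg]

theorem sum_nonempty_pow_card_lt_one [Fintype V] {x : ℝ} (hx0 : 0 ≤ x)
    (hx : Fintype.card V * x < log 2) : ∑ W : Finset V with W.Nonempty, x ^ #W < 1 := by
  classical
  have hadd : 1 + ∑ W : Finset V with W.Nonempty, x ^ #W = ∑ W : Finset V, x ^ #W := by
    rw [← sum_filter_add_sum_filter_not univ Finset.Nonempty, add_comm]
    simp [filter_eq']
  have hsum : ∑ W : Finset V, x ^ #W < 2 := by
    calc ∑ W : Finset V, x ^ #W = (x + 1) ^ Fintype.card V := by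
          simpa using Fintype.sum_pow_mul_eq_add_pow V x 1
      _ ≤ exp x ^ Fintype.card V := by gcongr; exact add_one_le_exp x
      _ = exp (Fintype.card V * x) := (exp_nat_mul _ _).symm
      _ < 2 := (lt_log_iff_exp_lt two_pos).1 hx
  linarith

theorem exists_nearlyInjective [Fintype ι] [Fintype V] [Fintype U] [Nonempty U]
    [DecidableEq U] {t c : ℝ} {k : ℕ} (ht : 0 < t)
    (hk : k * Fintype.card ι * exp t ≤ Fintype.card U)
    (hV : Fintype.card V * exp (1 - t * c) < log 2) :
    ∃ φ : ι → V → U, NearlyInjective φ k c := by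
  classical
  let weight (φ : ι → V → U) (W : Finset V) : ℝ :=
    exp (t * (∑ i, (collisions (φ i) W : ℝ) - c * #W))
  obtain ⟨φ, -, hφ⟩ : ∃ φ ∈ (univ : Finset (ι → V → U)),
      ∑ W : Finset V with W.Nonempty ∧ #W ≤ k, weight φ W < 1 := by
    refine exists_lt_of_expect_lt univ_nonempty ?_
    calc 𝔼 φ, ∑ W with W.Nonempty ∧ #W ≤ k, weight φ W
        = ∑ W with W.Nonempty ∧ #W ≤ k, 𝔼 φ, weight φ W := expect_sum_comm _ _ _
      _ ≤ ∑ W : Finset V with W.Nonempty ∧ #W ≤ k, exp (1 - t * c) ^ #W :=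
          sum_le_sum fun W hW => expect_exp_sum_collisions_sub_le c hk (mem_filter.1 hW).2.2
      _ ≤ ∑ W : Finset V with W.Nonempty, exp (1 - t * c) ^ #W :=
          sum_le_sum_of_subset_of_nonneg (monotone_filter_right _ fun _ _ h => h.1)
            fun _ _ _ => by positivity
      _ < 1 := sum_nonempty_pow_card_lt_one (exp_pos _).le hV
  refine ⟨φ, fun W hW => ?_⟩
  obtain rfl | hne := W.eq_empty_or_nonempty
  · simp [collisions]
  have hweight : weight φ W < 1 :=
    (single_le_sum (f := weight φ) (fun W _ => (exp_pos _).le)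
      (mem_filter.2 ⟨mem_univ W, hne, hW⟩)).trans_lt hφ
  exact sub_nonpos.1 (neg_of_mul_neg_right (exp_lt_one_iff.1 hweight) ht.le).le

end Collisions

section Edges

/-- The edges of the complete graph on `S`, as non-diagonal unordered pairs. -/
def edgesIn [DecidableEq V] (S : Finset V) : Finset (Sym2 V) :=
  {e ∈ S.sym2 | ¬ e.IsDiag}

theorem mk_mem_edgesIn [DecidableEq V] {S : Finset V} {u v : V} :
    s(u, v) ∈ edgesIn S ↔ (u ∈ S ∧ v ∈ S) ∧ u ≠ v := by
  rw [edgesIn, mem_filter, mk_mem_sym2_iff, Sym2.mk_isDiag_iff]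

theorem card_edgesIn [DecidableEq V] (S : Finset V) : #(edgesIn S) = (#S).choose 2 := by
  rw [edgesIn, sym2_eq_image, Sym2.filter_image_mk_not_isDiag, Sym2.card_image_offDiag]

theorem injOn_sym2Map {f : V → U} {T : Finset V} (hf : Set.InjOn f T) :
    Set.InjOn (Sym2.map f) T.sym2 := by
  intro e he e' he'
  induction e with | _ a b
  induction e' with | _ a' b'
  simp only [mem_coe, mk_mem_sym2_iff] at he he'
  simp only [Sym2.map_mk, Sym2.eq_iff, hf.eq_iff he.1 he'.1, hf.eq_iff he.2 he'.2,
    hf.eq_iff he.1 he'.2, hf.eq_iff he.2 he'.1, imp_self]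

theorem map_mem_edgesIn_image [DecidableEq V] [DecidableEq U] {f : V → U} {T : Finset V}
    (hf : Set.InjOn f T) {e : Sym2 V} (he : e ∈ edgesIn T) :
    e.map f ∈ edgesIn (T.image f) := by
  induction e with | _ u v
  obtain ⟨⟨hu, hv⟩, huv⟩ := mk_mem_edgesIn.1 he
  exact mk_mem_edgesIn.2 ⟨⟨mem_image_of_mem f hu, mem_image_of_mem f hv⟩, hf.ne hu hv huv⟩

theorem sum_card_filter_mem_eq [DecidableEq V] {S : Finset V} {F : Finset (Sym2 V)}
    (hF : F ⊆ edgesIn S) : ∑ v ∈ S, #{e ∈ F | v ∈ e} = 2 * #F := by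
  have hends : ∀ e ∈ F, #{v ∈ S | v ∈ e} = 2 := by
    intro e he
    obtain ⟨heS, hdiag⟩ := mem_filter.1 (hF he)
    rw [← Sym2.card_toFinset_of_not_isDiag e hdiag]
    congr 1
    ext v
    simpa using fun hv => mem_sym2_iff.1 heS v hv
  calc ∑ v ∈ S, #{e ∈ F | v ∈ e} = ∑ e ∈ F, #{v ∈ S | v ∈ e} :=
        sum_card_bipartiteAbove_eq_sum_card_bipartiteBelow fun v e => v ∈ e
    _ = 2 * #F := by rw [sum_congr rfl hends, sum_const, smul_eq_mul, mul_comm]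

end Edges

section Transversals

theorem exists_maximal_transversal (f : V → U) (w : V → ℕ) (S : Finset V) :
    ∃ T ⊆ S, Set.InjOn f T ∧ ∀ v ∈ S, ∃ u ∈ T, f u = f v ∧ w v ≤ w u := by
  classical
  obtain rfl | ⟨a, -⟩ := S.eq_empty_or_nonempty
  · exact ⟨∅, Subset.rfl, by simp, by simp⟩
  have : Nonempty V := ⟨a⟩
  have hmax : ∀ x ∈ S.image f, ∃ u ∈ S, f u = x ∧ ∀ v ∈ S, f v = x → w v ≤ w u := by
    intro x hx
    obtain ⟨a, ha, rfl⟩ := mem_image.1 hx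
    obtain ⟨u, hu, hmax⟩ := exists_max_image {v ∈ S | f v = f a} w ⟨a, by simp [ha]⟩
    simp only [mem_filter] at hu hmax
    exact ⟨u, hu.1, hu.2, fun v hv hva => hmax v ⟨hv, hva⟩⟩
  choose! g hgS hfg hgmax using hmax
  refine ⟨(S.image f).image g, image_subset_iff.2 hgS, ?_, fun v hv => ?_⟩
  · simp only [coe_image]
    rintro - ⟨x, hx, rfl⟩ - ⟨y, hy, rfl⟩ hxy
    rw [hfg x (mem_image.2 hx), hfg y (mem_image.2 hy)] at hxy
    rw [hxy]
  · have hx := mem_image_of_mem f hv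
    exact ⟨g (f v), mem_image_of_mem g hx, hfg _ hx, hgmax _ hx v hv rfl⟩

theorem card_filter_lt_le_collisions [DecidableEq V] [DecidableEq U] {f : V → U} {w : V → ℕ}
    {S T : Finset V} (hTS : T ⊆ S) (hT : ∀ v ∈ S, ∃ u ∈ T, f u = f v ∧ w v ≤ w u) (x : ℕ) :
    #{v ∈ S \ T | x < w v} ≤ collisions f {v ∈ S | x < w v} := by
  have himage : #({v ∈ S | x < w v}.image f) ≤ #{v ∈ T | x < w v} := by
    refine card_le_card_of_surjOn f fun y hy => ?_
    obtain ⟨v, hv, rfl⟩ := mem_image.1 hy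
    obtain ⟨hvS, hxv⟩ := mem_filter.1 hv
    obtain ⟨u, huT, huv, hw⟩ := hT v hvS
    exact ⟨u, mem_filter.2 ⟨huT, hxv.trans_le hw⟩, huv⟩
  have hsplit : #{v ∈ S \ T | x < w v} + #{v ∈ T | x < w v} = #{v ∈ S | x < w v} := by
    simp only [card_filter]
    exact sum_sdiff hTS
  have := card_image_add_collisions f {v ∈ S | x < w v}
  lia

theorem sum_eq_sum_card_filter_lt (w : V → ℕ) (S : Finset V) {N : ℕ} (hN : ∀ v ∈ S, w v ≤ N) :
    ∑ v ∈ S, w v = ∑ x ∈ range N, #{v ∈ S | x < w v} := by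
  calc ∑ v ∈ S, w v = ∑ v ∈ S, #{x ∈ range N | x < w v} := by
        refine sum_congr rfl fun v hv => ?_
        rw [range_eq_Ico, Ico_filter_lt, min_eq_right (hN v hv), Nat.card_Ico, Nat.sub_zero]
    _ = ∑ x ∈ range N, #{v ∈ S | x < w v} :=
        sum_card_bipartiteAbove_eq_sum_card_bipartiteBelow fun v x => x < w v

theorem NearlyInjective.exists_transversals [Fintype ι] [DecidableEq V] [DecidableEq U]
    {φ : ι → V → U} {k : ℕ} {c : ℝ} (hφ : NearlyInjective φ k c) {S : Finset V} (hS : #S ≤ k)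
    (w : V → ℕ) :
    ∃ T : ι → Finset V, (∀ i, Set.InjOn (φ i) (T i)) ∧
      ∑ i, ∑ v ∈ S \ T i, (w v : ℝ) ≤ c * ∑ v ∈ S, (w v : ℝ) := by
  choose T hTS hinj hmax using fun i => exists_maximal_transversal (φ i) w S
  refine ⟨T, hinj, ?_⟩
  have hN : ∀ v ∈ S, w v ≤ S.sup w := fun v hv => le_sup hv
  -- Near injectivity is applied to each superlevel set of `w` and summed over the levels.
  have hlayer (A : Finset V) (hA : A ⊆ S) :
      ∑ v ∈ A, (w v : ℝ) = ∑ x ∈ range (S.sup w), (#{v ∈ A | x < w v} : ℝ) := by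
    exact_mod_cast sum_eq_sum_card_filter_lt w A fun v hv => hN v (hA hv)
  calc ∑ i, ∑ v ∈ S \ T i, (w v : ℝ)
      = ∑ x ∈ range (S.sup w), ∑ i, (#{v ∈ S \ T i | x < w v} : ℝ) := by
        rw [sum_comm]
        exact sum_congr rfl fun i _ => hlayer _ sdiff_subset
    _ ≤ ∑ x ∈ range (S.sup w), ∑ i, (collisions (φ i) {v ∈ S | x < w v} : ℝ) := by
        gcongr with x _ i _
        exact card_filter_lt_le_collisions (hTS i) (hmax i) x
    _ ≤ ∑ x ∈ range (S.sup w), c * #{v ∈ S | x < w v} := by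
        gcongr with x _
        exact hφ _ ((card_filter_le _ _).trans hS)
    _ = c * ∑ v ∈ S, (w v : ℝ) := by rw [← mul_sum, hlayer S Subset.rfl]

theorem NearlyInjective.exists_edge_transversals [Fintype ι] [DecidableEq V] [DecidableEq U]
    {φ : ι → V → U} {k : ℕ} {c : ℝ} (hφ : NearlyInjective φ k c) {S : Finset V} (hS : #S ≤ k)
    {F : Finset (Sym2 V)} (hF : F ⊆ edgesIn S) :
    ∃ T : ι → Finset V, (∀ i, Set.InjOn (φ i) (T i)) ∧
      ∑ i, (#(F \ edgesIn (T i)) : ℝ) ≤ 2 * c * #F := by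
  obtain ⟨T, hinj, hsum⟩ := hφ.exists_transversals hS fun v => #{e ∈ F | v ∈ e}
  refine ⟨T, hinj, ?_⟩
  have hcover (i : ι) : #(F \ edgesIn (T i)) ≤ ∑ v ∈ S \ T i, #{e ∈ F | v ∈ e} := by
    refine (card_le_card fun e he => ?_).trans card_biUnion_le
    obtain ⟨heF, heT⟩ := mem_sdiff.1 he
    obtain ⟨heS, hdiag⟩ := mem_filter.1 (hF heF)
    obtain ⟨v, hve, hvT⟩ : ∃ v ∈ e, v ∉ T i := by
      by_contra! hsub
      exact heT (mem_filter.2 ⟨mem_sym2_iff.2 hsub, hdiag⟩)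
    exact mem_biUnion.2 ⟨v, mem_sdiff.2 ⟨mem_sym2_iff.1 heS v hve, hvT⟩,
      mem_filter.2 ⟨heF, hve⟩⟩
  have hdegrees : ∑ v ∈ S, (#{e ∈ F | v ∈ e} : ℝ) = 2 * #F := by
    exact_mod_cast sum_card_filter_mem_eq hF
  calc ∑ i, (#(F \ edgesIn (T i)) : ℝ)
      ≤ ∑ i, ∑ v ∈ S \ T i, (#{e ∈ F | v ∈ e} : ℝ) := by
        gcongr with i _
        exact_mod_cast hcover i
    _ ≤ c * ∑ v ∈ S, (#{e ∈ F | v ∈ e} : ℝ) := hsum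
    _ = 2 * c * #F := by rw [hdegrees]; ring

end Transversals

section Marking

theorem exists_marking [Fintype ι] [Finite U] [DecidableEq U] (q : ℕ) [NeZero q]
    {𝒜 : Finset (ι → Finset U)} {𝒯 : Finset (Finset U)} {a b x y : ℝ}
    (h𝒜 : ∀ P ∈ 𝒜, ∑ i, (#(P i) : ℝ) ≤ a) (h𝒯 : ∀ T ∈ 𝒯, b ≤ #T)
    (h : #𝒜 * exp (2 * a / q - y) + Fintype.card ι * #𝒯 * exp (x - b / (2 * q)) < 1) :
    ∃ M : ι → Finset U, (∀ P ∈ 𝒜, ∑ i, (#(P i ∩ M i) : ℝ) < y) ∧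
      ∀ i, ∀ T ∈ 𝒯, x < #(T ∩ M i) := by
  classical
  have := Fintype.ofFinite U
  let layer (i : ι) : U ↪ (_ : ι) × U := .sigmaMk (β := fun _ => U) i
  let layers : Finset (Finset ((_ : ι) × U)) := (univ ×ˢ 𝒯).image fun p => p.2.map (layer p.1)
  have hsum : ∀ A ∈ 𝒜.image univ.sigma, (#A : ℝ) ≤ a :=
    forall_mem_image.2 fun P hP => by simpa using h𝒜 P hP
  have hlayers : ∀ L ∈ layers, b ≤ #L :=
    forall_mem_image.2 fun p hp => by simpa using h𝒯 _ (mem_product.1 hp).2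
  have hcard : #layers ≤ Fintype.card ι * #𝒯 := card_image_le.trans_eq (card_product _ _)
  obtain ⟨M, hM𝒜, hM𝒯⟩ := exists_finset_card_inter_bounds (x := x) (y := y) q hsum hlayers <| by
    refine lt_of_le_of_lt ?_ h
    gcongr
    · exact card_image_le
    · exact_mod_cast hcard
  let fibre (i : ι) : Finset U := {v | ⟨i, v⟩ ∈ M}
  refine ⟨fibre, fun P hP => ?_, fun i T hT => ?_⟩
  · have hinter : univ.sigma P ∩ M = univ.sigma fun i => P i ∩ fibre i := by
      ext; simp [fibre]
    simpa [hinter] using hM𝒜 _ (mem_image_of_mem _ hP)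
  · have hinter : T.map (layer i) ∩ M = (T ∩ fibre i).map (layer i) := by
      ext ⟨i', v⟩
      simp only [layer, fibre, mem_inter, mem_map, mem_filter_univ,
        Function.Embedding.sigmaMk_apply]
      grind
    rw [← card_map (layer i), ← hinter]
    exact hM𝒯 _ (mem_image.2 ⟨(i, T), mem_product.2 ⟨mem_univ i, hT⟩, rfl⟩)

end Marking

section Palettes

variable [Fintype ι] [DecidableEq U]

/-- The colours `i` for which `φ i` sends the ends of `e` to distinct points. -/
def separating (φ : ι → V → U) (e : Sym2 V) : Finset ι :=
  {i | ¬ (e.map (φ i)).IsDiag}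

/-- The colours separating `e` for which the image of `e` avoids the set `M i` of marked edges. -/
def available (φ : ι → V → U) (M : ι → Finset (Sym2 U)) (e : Sym2 V) : Finset ι :=
  {i ∈ separating φ e | e.map (φ i) ∉ M i}

theorem NearlyInjective.card_sub_le_card_separating {φ : ι → V → U} {k : ℕ} {c : ℝ}
    (hφ : NearlyInjective φ k c) (hk : 2 ≤ k) {e : Sym2 V} (he : ¬ e.IsDiag) :
    Fintype.card ι - 2 * c ≤ #(separating φ e) := by
  classical
  induction e with | _ u v
  have huv : #{u, v} = 2 := card_pair he
  have hcollision (i : ι) :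
      (if (s(u, v).map (φ i)).IsDiag then 1 else 0) ≤ collisions (φ i) {u, v} := by
    split_ifs with h
    · rw [Sym2.map_mk, Sym2.mk_isDiag_iff] at h
      simp [collisions, huv, h]
    · exact Nat.zero_le _
  have hpartition : #{i | (s(u, v).map (φ i)).IsDiag} + #(separating φ s(u, v)) =
      Fintype.card ι := card_filter_add_card_filter_not _
  have hdiag : (#{i | (s(u, v).map (φ i)).IsDiag} : ℝ) ≤ 2 * c := by
    calc (#{i | (s(u, v).map (φ i)).IsDiag} : ℝ)
        ≤ ∑ i, (collisions (φ i) {u, v} : ℝ) := by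
          rw [card_filter]
          exact_mod_cast sum_le_sum fun i _ => hcollision i
      _ ≤ c * #{u, v} := hφ _ (huv.trans_le hk)
      _ = 2 * c := by rw [huv]; push_cast; ring
  rw [← hpartition]
  push_cast
  linarith

variable [DecidableEq ι] [DecidableEq V]

theorem card_filter_notMem_available_le {φ : ι → V → U} (M : ι → Finset (Sym2 U)) {i : ι}
    {T : Finset V} (hT : Set.InjOn (φ i) T) (F : Finset (Sym2 V)) :
    #{e ∈ F | i ∉ available φ M e} ≤
      #((F ∩ edgesIn T).image (Sym2.map (φ i)) ∩ M i) + #(F \ edgesIn T) := by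
  have hsplit : {e ∈ F | i ∉ available φ M e} ⊆
      {e ∈ F ∩ edgesIn T | e.map (φ i) ∈ M i} ∪ F \ edgesIn T := by
    intro e he
    obtain ⟨heF, hei⟩ := mem_filter.1 he
    by_cases heT : e ∈ edgesIn T
    · have hsep : i ∈ separating φ e := mem_filter.2
        ⟨mem_univ i, (mem_filter.1 (map_mem_edgesIn_image hT heT)).2⟩
      have hmarked : e.map (φ i) ∈ M i := by
        by_contra hM
        exact hei (mem_filter.2 ⟨hsep, hM⟩)
      exact mem_union_left _ (mem_filter.2 ⟨mem_inter.2 ⟨heF, heT⟩, hmarked⟩)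
    · exact mem_union_right _ (mem_sdiff.2 ⟨heF, heT⟩)
  refine (card_le_card hsplit).trans ((card_union_le _ _).trans (Nat.add_le_add_right ?_ _))
  refine card_le_card_of_injOn (Sym2.map (φ i)) (fun e he => ?_) fun e he e' he' => ?_
  · obtain ⟨heFT, heM⟩ := mem_filter.1 he
    exact mem_inter.2 ⟨mem_image_of_mem _ heFT, heM⟩
  · have hmemT {e} (he : e ∈ {e ∈ F ∩ edgesIn T | e.map (φ i) ∈ M i}) : e ∈ T.sym2 :=
      (mem_filter.1 (mem_inter.1 (mem_filter.1 he).1).2).1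
    exact injOn_sym2Map hT (hmemT he) (hmemT he')

theorem NearlyInjective.exists_image_edges {φ : ι → V → U} {k : ℕ} {c : ℝ}
    (hφ : NearlyInjective φ k c) {S : Finset V} (hS : #S ≤ k) {F : Finset (Sym2 V)}
    (hF : F ⊆ edgesIn S) :
    ∃ P : ι → Finset (Sym2 U), (∀ i, #(P i) ≤ #F) ∧ ∀ M : ι → Finset (Sym2 U),
      ∑ e ∈ F, (#(available φ M e)ᶜ : ℝ) ≤ ∑ i, (#(P i ∩ M i) : ℝ) + 2 * c * #F := by
  obtain ⟨T, hinj, hT⟩ := hφ.exists_edge_transversals hS hF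
  refine ⟨fun i => (F ∩ edgesIn (T i)).image (Sym2.map (φ i)),
    fun i => card_image_le.trans (card_le_card inter_subset_left), fun M => ?_⟩
  calc ∑ e ∈ F, (#(available φ M e)ᶜ : ℝ)
      = ∑ i, (#{e ∈ F | i ∉ available φ M e} : ℝ) := by
        have hcompl (e : Sym2 V) :
            (available φ M e)ᶜ = ({i | i ∉ available φ M e} : Finset ι) := by ext; simp
        simp only [hcompl]
        exact_mod_cast sum_card_bipartiteAbove_eq_sum_card_bipartiteBelow
          fun e i => i ∉ available φ M e
    _ ≤ ∑ i, ((#((F ∩ edgesIn (T i)).image (Sym2.map (φ i)) ∩ M i) : ℝ) +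
          #(F \ edgesIn (T i))) := by
        gcongr with i _
        exact_mod_cast card_filter_notMem_available_le M (hinj i) F
    _ ≤ _ := by
        rw [sum_add_distrib]
        gcongr

theorem exists_subset_card_eq_of_subset {α : Type*} {A B : Finset α} {s : ℕ} (hAB : A ⊆ B)
    (hs : s ≤ #B) : ∃ C ⊆ B, #C = s ∧ (s ≤ #A → C ⊆ A) := by
  by_cases h : s ≤ #A
  · obtain ⟨C, hC, hCs⟩ := exists_subset_card_eq h
    exact ⟨C, hC.trans hAB, hCs, fun _ => hC⟩
  · obtain ⟨C, hC, hCs⟩ := exists_subset_card_eq hs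
    exact ⟨C, hC, hCs, fun h' => absurd h' h⟩

theorem exists_colouring {φ : ι → V → U} {M : ι → Finset (Sym2 U)} {s d j k : ℕ}
    (hsd : s + d = Fintype.card ι) (hsep : ∀ e, ¬ e.IsDiag → s ≤ #(separating φ e))
    (hsparse : ∀ S, #S = k → ∀ F ⊆ edgesIn S, #F = j → ∑ e ∈ F, #(available φ M e)ᶜ < d * j)
    (hdense : ∀ i, ∀ T, #T = k → j ≤ #(edgesIn T ∩ M i)) :
    ∃ χ : Sym2 V → Finset ι, (∀ e, ¬ e.IsDiag → #(χ e) = s) ∧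
      ∀ S, #S = k → ∀ i, ∃ e ∈ edgesIn S, i ∉ χ e := by
  choose! χ hχsep hχcard hχavail using fun e he =>
    exists_subset_card_eq_of_subset (filter_subset _ _ : available φ M e ⊆ _) (hsep e he)
  refine ⟨χ, hχcard, fun S hS i => ?_⟩
  by_contra! hmono
  have hinj : Set.InjOn (φ i) S := by
    intro u hu v hv huv
    by_contra hne
    have he := mk_mem_edgesIn.2 ⟨⟨hu, hv⟩, hne⟩
    exact (mem_filter.1 (hχsep s(u, v) hne (hmono _ he))).2 huv
  have hstarved : edgesIn (S.image (φ i)) ∩ M i ⊆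
      {e ∈ edgesIn S | #(available φ M e) < s}.image (Sym2.map (φ i)) := by
    intro e' he'
    obtain ⟨heT, heM⟩ := mem_inter.1 he'
    induction e' with | _ a b
    obtain ⟨⟨ha, hb⟩, hab⟩ := mk_mem_edgesIn.1 heT
    obtain ⟨u, hu, rfl⟩ := mem_image.1 ha
    obtain ⟨v, hv, rfl⟩ := mem_image.1 hb
    have huv : u ≠ v := ne_of_apply_ne _ hab
    have he := mk_mem_edgesIn.2 ⟨⟨hu, hv⟩, huv⟩
    refine mem_image.2 ⟨s(u, v), mem_filter.2 ⟨he, not_le.1 fun hs => ?_⟩, rfl⟩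
    exact (mem_filter.1 (hχavail s(u, v) huv hs (hmono _ he))).2 heM
  obtain ⟨F, hF, hFj⟩ := exists_subset_card_eq <|
    (hdense i _ ((card_image_of_injOn hinj).trans hS)).trans <|
      (card_le_card hstarved).trans card_image_le
  have hmany : ∀ e ∈ F, d ≤ #(available φ M e)ᶜ := by
    intro e he
    have := (mem_filter.1 (hF he)).2
    rw [card_compl]
    lia
  refine (hsparse S hS F (hF.trans (filter_subset _ _)) hFj).not_ge ?_
  rw [mul_comm, ← hFj, ← smul_eq_mul]
  exact card_nsmul_le_sum _ _ _ hmany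

end Palettes

section SparseMarkings

/-- The `j`-element sets of edges lying inside some `k`-element set of vertices. -/
def cliqueEdgeSets (V : Type*) [Fintype V] [DecidableEq V] (k j : ℕ) :
    Finset (Finset (Sym2 V)) :=
  (univ.powersetCard k).biUnion fun S => (edgesIn S).powersetCard j

theorem mem_cliqueEdgeSets [Fintype V] [DecidableEq V] {k j : ℕ} {F : Finset (Sym2 V)} :
    F ∈ cliqueEdgeSets V k j ↔ ∃ S, #S = k ∧ F ⊆ edgesIn S ∧ #F = j := by
  simp [cliqueEdgeSets, mem_powersetCard]

theorem card_cliqueEdgeSets_le (V : Type*) [Fintype V] [DecidableEq V] (k j : ℕ) :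
    #(cliqueEdgeSets V k j) ≤ Fintype.card V ^ k * (k.choose 2).choose j := by
  have hsets : ∀ S ∈ univ.powersetCard k, #((edgesIn (S : Finset V)).powersetCard j) ≤
      (k.choose 2).choose j := by
    intro S hS
    rw [card_powersetCard, card_edgesIn, (mem_powersetCard.1 hS).2]
  refine (card_biUnion_le_card_mul _ _ _ hsets).trans (Nat.mul_le_mul_right _ ?_)
  rw [card_powersetCard, card_univ]
  exact Nat.choose_le_pow _ _

variable [Fintype ι] [DecidableEq ι] [Fintype V] [DecidableEq V] [Fintype U] [DecidableEq U]

theorem NearlyInjective.exists_sparse_marking {φ : ι → V → U} {k : ℕ} {c : ℝ}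
    (hφ : NearlyInjective φ k c) (j q : ℕ) [NeZero q] {y : ℝ}
    (h : (Fintype.card V : ℝ) ^ k * (k.choose 2).choose j *
        exp (2 * (Fintype.card ι * j) / q - y) +
      Fintype.card ι * (Fintype.card U : ℝ) ^ k * exp (j - (k.choose 2 : ℝ) / (2 * q)) < 1) :
    ∃ M : ι → Finset (Sym2 U),
      (∀ S, #S = k → ∀ F ⊆ edgesIn S, #F = j →
        ∑ e ∈ F, (#(available φ M e)ᶜ : ℝ) < y + 2 * c * j) ∧
      ∀ i, ∀ T, #T = k → j < #(edgesIn T ∩ M i) := by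
  have himages : ∀ F ∈ cliqueEdgeSets V k j, ∃ P : ι → Finset (Sym2 U), (∀ i, #(P i) ≤ j) ∧
      ∀ M : ι → Finset (Sym2 U),
        ∑ e ∈ F, (#(available φ M e)ᶜ : ℝ) ≤ ∑ i, (#(P i ∩ M i) : ℝ) + 2 * c * j := by
    intro F hF
    obtain ⟨S, hS, hFS, rfl⟩ := mem_cliqueEdgeSets.1 hF
    exact hφ.exists_image_edges hS.le hFS
  choose! P hPcard hP using himages
  have hPsum : ∀ A ∈ (cliqueEdgeSets V k j).image P,
      ∑ i, (#(A i) : ℝ) ≤ Fintype.card ι * j := by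
    refine forall_mem_image.2 fun F hF => ?_
    exact_mod_cast sum_le_card_nsmul univ _ _ fun i _ => hPcard F hF i
  have hedges : ∀ E ∈ (univ.powersetCard k).image (edgesIn (V := U)),
      (k.choose 2 : ℝ) ≤ #E := by
    refine forall_mem_image.2 fun T hT => ?_
    rw [card_edgesIn, (mem_powersetCard.1 hT).2]
  have hPcount : #((cliqueEdgeSets V k j).image P) ≤
      Fintype.card V ^ k * (k.choose 2).choose j :=
    card_image_le.trans (card_cliqueEdgeSets_le V k j)
  have hTcount : #((univ.powersetCard k).image (edgesIn (V := U))) ≤ Fintype.card U ^ k := by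
    refine card_image_le.trans ?_
    rw [card_powersetCard, card_univ]
    exact Nat.choose_le_pow _ _
  obtain ⟨M, hMsparse, hMdense⟩ := exists_marking (x := j) (y := y) q hPsum hedges <| by
    refine lt_of_le_of_lt ?_ h
    gcongr
    · exact_mod_cast hPcount
    · exact_mod_cast hTcount
  refine ⟨M, fun S hS F hF hFj => ?_, fun i T hT => ?_⟩
  · have hFmem := mem_cliqueEdgeSets.2 ⟨S, hS, hF, hFj⟩
    exact (hP F hFmem M).trans_lt (by gcongr; exact hMsparse _ (mem_image_of_mem P hFmem))
  · exact_mod_cast hMdense i _ (mem_image_of_mem _ (mem_powersetCard.2 ⟨subset_univ T, hT⟩))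

end SparseMarkings

section SetColouringRamsey

theorem exists_hasSetColouringRamsey {s : ℕ} (hs : 1 ≤ s) (r k : ℕ) :
    ∃ n, HasSetColouringRamsey r s k n := by
  obtain ⟨N, hN⟩ := exists_isNClique_of_iSup_eq_top.{0, 0} fun _ : Fin r => k
  refine ⟨N, fun χ hsymm hcard => ?_⟩
  let G (i : Fin r) : SimpleGraph (Fin N) :=
    { Adj := fun u v => u ≠ v ∧ i ∈ χ u v
      symm := ⟨fun u v h => ⟨h.1.symm, hsymm u v ▸ h.2⟩⟩
      loopless := ⟨fun _ h => h.1 rfl⟩ }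
  have hG : ⨆ i, G i = ⊤ := by
    ext u v
    simp only [SimpleGraph.iSup_adj, SimpleGraph.top_adj]
    refine ⟨fun ⟨_, h⟩ => h.1, fun huv => ?_⟩
    obtain ⟨i, hi⟩ := card_pos.1 (hs.trans_eq (hcard u v huv).symm)
    exact ⟨i, huv, hi⟩
  obtain ⟨i, S, -, hS⟩ := hN G hG univ (card_fin N).ge
  exact ⟨S, i, hS.card_eq, fun u hu v hv huv => (hS.isClique hu hv huv).2⟩

-- Of the `d * j` colours lost on `j` edges, marks may account for `3/4` and collisions for `1/4`.
theorem not_hasSetColouringRamsey {r s d k n j m q : ℕ} [NeZero m] [NeZero q] {t : ℝ}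
    (hsd : s + d = r) (hk : 2 ≤ k) (ht : 0 < t) (hm : k * r * exp t ≤ m)
    (hn : n * exp (1 - t * (d / 8)) < log 2)
    (h : (n : ℝ) ^ k * (k.choose 2).choose j * exp (2 * (r * j) / q - 3 / 4 * d * j) +
      r * (m : ℝ) ^ k * exp (j - (k.choose 2 : ℝ) / (2 * q)) < 1) :
    ¬ HasSetColouringRamsey r s k n := by
  intro hramsey
  obtain ⟨φ, hφ⟩ := exists_nearlyInjective (ι := Fin r) (V := Fin n) (U := Fin m) (c := d / 8) ht
    (by simpa using hm) (by simpa using hn)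
  obtain ⟨M, hsparse, hdense⟩ := hφ.exists_sparse_marking j q (by simpa using h)
  have hsep (e : Sym2 (Fin n)) (he : ¬ e.IsDiag) : s ≤ #(separating φ e) := by
    have hcard := hφ.card_sub_le_card_separating hk he
    have hsd' : (s : ℝ) + d = r := by exact_mod_cast hsd
    rw [Fintype.card_fin] at hcard
    have : (s : ℝ) ≤ #(separating φ e) := by linarith [(Nat.cast_nonneg d : (0 : ℝ) ≤ d)]
    exact_mod_cast this
  obtain ⟨χ, hχ, hmono⟩ := exists_colouring (M := M) (hsd.trans (Fintype.card_fin r).symm) hsep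
    (fun S hS F hF hFj => by
      have hlt : ∑ e ∈ F, (#(available φ M e)ᶜ : ℝ) < d * j := by linarith [hsparse S hS F hF hFj]
      exact_mod_cast hlt)
    fun i T hT => (hdense i T hT).le
  obtain ⟨S, i, hS, hi⟩ := hramsey (fun u v => χ s(u, v)) (fun u v => by rw [Sym2.eq_swap])
    fun u v huv => hχ s(u, v) huv
  obtain ⟨e, he, hie⟩ := hmono S hS i
  induction e with | _ u v
  obtain ⟨⟨hu, hv⟩, huv⟩ := mk_mem_edgesIn.1 he
  exact hie (hi u hu v hv huv)

end SetColouringRamsey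

section Numerics

theorem exp_neg_two_lt_one_fourth : exp (-2) < 1 / 4 := by
  have hexp : (4 : ℝ) < exp 2 := by
    calc (4 : ℝ) = 2 ^ 2 := by norm_num
      _ < exp 1 ^ 2 := by gcongr; exact exp_one_gt_two
      _ = exp 2 := by rw [← exp_nat_mul]; norm_num
  rw [exp_neg, one_div]
  exact inv_strictAnti₀ four_pos hexp

theorem mul_exp_lt_log_two {n x : ℝ} (hx : 3 ≤ x) (hn : n ≤ exp x) :
    n * exp (1 - 2 * x) < log 2 := by
  calc n * exp (1 - 2 * x) ≤ exp x * exp (1 - 2 * x) := by gcongr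
    _ = exp (1 - x) := by rw [← exp_add]; ring_nf
    _ ≤ exp (-2) := by
        gcongr
        linarith
    _ < log 2 := by linarith [exp_neg_two_lt_one_fourth, log_two_gt_d9]

theorem cast_ceil_exp_le {x : ℝ} (hx : 0 ≤ x) : (⌈exp x⌉₊ : ℝ) ≤ exp (x + 1) := by
  have hceil : (⌈exp x⌉₊ : ℝ) < exp x + 1 := Nat.ceil_lt_add_one (exp_pos x).le
  have hone : 1 ≤ exp x := one_le_exp hx
  rw [exp_add]
  nlinarith [exp_one_gt_two]

theorem cast_choose_le_div_mul_exp_pow (N : ℕ) {j : ℕ} (hj : 0 < j) :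
    (N.choose j : ℝ) ≤ (N / j * exp 1) ^ j := by
  have hj' : (0 : ℝ) < j := by exact_mod_cast hj
  calc (N.choose j : ℝ) ≤ N ^ j / j.factorial := Nat.choose_le_pow_div j N
    _ = (N / j) ^ j * (j ^ j / j.factorial) := by rw [div_pow]; field_simp
    _ ≤ (N / j) ^ j * exp j := by gcongr; exact pow_div_factorial_le_exp _ hj'.le j
    _ = (N / j * exp 1) ^ j := by rw [mul_pow, ← exp_nat_mul, mul_one]

theorem cast_choose_choose_two_le_exp {k j : ℕ} {r : ℝ} (hj : 0 < j) (hr : 0 < r)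
    (hk : (k : ℝ) ^ 2 ≤ 100 * r * j) :
    ((k.choose 2).choose j : ℝ) ≤ exp (j * (7 + log r)) := by
  have hj' : (0 : ℝ) < j := by exact_mod_cast hj
  have hratio : (k.choose 2 : ℝ) / j ≤ 50 * r := by
    rw [div_le_iff₀ hj', Nat.cast_choose_two]
    nlinarith [(Nat.cast_nonneg k : (0 : ℝ) ≤ k)]
  have h50 : (50 : ℝ) ≤ exp 6 := by
    calc (50 : ℝ) ≤ 2 ^ 6 := by norm_num
      _ ≤ exp 1 ^ 6 := by gcongr; exact exp_one_gt_two.le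
      _ = exp 6 := by rw [← exp_nat_mul]; norm_num
  calc ((k.choose 2).choose j : ℝ)
      ≤ (k.choose 2 / j * exp 1) ^ j := cast_choose_le_div_mul_exp_pow _ hj
    _ ≤ (exp 6 * r * exp 1) ^ j := by
        gcongr
        exact hratio.trans (by gcongr)
    _ = exp (j * (7 + log r)) := by
        rw [exp_nat_mul, exp_add, exp_log hr, mul_right_comm, ← exp_add]
        norm_num

theorem mul_mul_exp_le_exp {k r E : ℝ} (hr : 0 < r) (hE : 10 ^ 7 ≤ E) (hrE : 10 ^ 8 * log r ≤ E)
    (hk : k ≤ E * r) : k * r * exp (E / 1000) ≤ exp (E / 500) := by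
  have hEexp : E ≤ exp (E / 2000) := by
    have := quadratic_le_exp_of_nonneg (x := E / 2000) (by linarith)
    nlinarith
  have hrexp : r ≤ exp (E / 10 ^ 8) := (log_le_iff_le_exp hr).1 (by linarith)
  calc k * r * exp (E / 1000) ≤ E * r * r * exp (E / 1000) := by gcongr
    _ ≤ exp (E / 2000) * exp (E / 10 ^ 8) * exp (E / 10 ^ 8) * exp (E / 1000) := by gcongr
    _ = exp (E / 2000 + E / 10 ^ 8 + E / 10 ^ 8 + E / 1000) := by simp only [exp_add]
    _ ≤ exp (E / 500) := by
        gcongr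
        linarith

theorem sparse_failure_le {r d k n j q : ℕ} {E : ℝ} (hr : 0 < r) (hd : (10 : ℝ) ^ 7 ≤ d)
    (hrd : 10 ^ 8 * log r ≤ d) (hk : k ≤ E * r) (hn : n ≤ exp (d * E / 16000)) (hj : 0 < j)
    (hkj : k * E / 100 ≤ j) (hq : 0 < q) (hrq : (8 * r : ℝ) ≤ d * q) :
    (n : ℝ) ^ k * (k.choose 2).choose j * exp (2 * (r * j) / q - 3 / 4 * d * j) ≤ exp (-2) := by
  have hr' : (0 : ℝ) < r := by exact_mod_cast hr
  have hq' : (0 : ℝ) < q := by exact_mod_cast hq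
  have hj' : (1 : ℝ) ≤ j := by exact_mod_cast hj
  have hpow : (n : ℝ) ^ k ≤ exp (d * j / 160) := by
    calc (n : ℝ) ^ k ≤ exp (d * E / 16000) ^ k := by gcongr
      _ = exp (d * (k * E / 100) / 160) := by rw [← exp_nat_mul]; ring_nf
      _ ≤ exp (d * j / 160) := by gcongr
  have hsq : (k : ℝ) ^ 2 ≤ 100 * r * j := by
    calc (k : ℝ) ^ 2 = k * k := sq _
      _ ≤ k * (E * r) := by gcongr
      _ = 100 * r * (k * E / 100) := by ring
      _ ≤ 100 * r * j := by gcongr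
  have hmean : 2 * (r * j : ℝ) / q ≤ d * j / 4 := by
    rw [div_le_iff₀ hq']
    nlinarith
  calc (n : ℝ) ^ k * (k.choose 2).choose j * exp (2 * (r * j) / q - 3 / 4 * d * j)
      ≤ exp (d * j / 160) * exp (j * (7 + log r)) * exp (d * j / 4 - 3 / 4 * d * j) := by
        gcongr
        exact cast_choose_choose_two_le_exp hj hr' hsq
    _ = exp (j * (7 + log r - (1 / 2 - 1 / 160) * d)) := by
        rw [← exp_add, ← exp_add]
        ring_nf
    _ ≤ exp (-2) := by
        gcongr
        nlinarith

theorem dense_failure_le {r k m j q : ℕ} {E : ℝ} (hr : 0 < r) (hk : 2 ≤ k) (hE : 10 ^ 7 ≤ E)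
    (hrE : 10 ^ 8 * log r ≤ E) (hm : m ≤ exp (E / 500 + 1)) (hj : j ≤ k * E / 100 + 1)
    (hq : 0 < q) (hqE : q * E ≤ 9 * k) :
    r * (m : ℝ) ^ k * exp (j - (k.choose 2 : ℝ) / (2 * q)) ≤ exp (-2) := by
  have hr' : (0 : ℝ) < r := by exact_mod_cast hr
  have hq' : (0 : ℝ) < q := by exact_mod_cast hq
  have hk' : (2 : ℝ) ≤ k := by exact_mod_cast hk
  have hrexp : (r : ℝ) ≤ exp (E / 10 ^ 8) := (log_le_iff_le_exp hr').1 (by linarith)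
  have hmean : k * E / 72 ≤ (k.choose 2 : ℝ) / (2 * q) := by
    rw [le_div_iff₀ (by positivity), Nat.cast_choose_two]
    nlinarith
  calc r * (m : ℝ) ^ k * exp (j - (k.choose 2 : ℝ) / (2 * q))
      ≤ exp (E / 10 ^ 8) * exp (E / 500 + 1) ^ k * exp (k * E / 100 + 1 - k * E / 72) := by
        gcongr
    _ = exp (E / 10 ^ 8 + k * (E / 500 + 1) + (k * E / 100 + 1 - k * E / 72)) := by
        rw [exp_add (_ + _), exp_add (E / 10 ^ 8), exp_nat_mul]
    _ ≤ exp (-2) := by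
        gcongr
        nlinarith

theorem not_hasSetColouringRamsey_of_le_exp {r s d k n : ℕ} {E : ℝ} (hr : 2 ≤ r)
    (hsd : s + d = r) (hE : E * r = d * k) (hd : 10 ^ 8 * log r ≤ d) (hrE : 10 ^ 8 * log r ≤ E)
    (hn : n ≤ exp (d * E / 16000)) : ¬ HasSetColouringRamsey r s k n := by
  have hr' : (2 : ℝ) ≤ r := by exact_mod_cast hr
  have hlog : log 2 ≤ log r := log_le_log two_pos hr'
  have hd0 : (10 : ℝ) ^ 7 ≤ d := by linarith [log_two_gt_d9]
  have hE0 : 10 ^ 7 ≤ E := by linarith [log_two_gt_d9]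
  have hdpos : (0 : ℝ) < d := by linarith
  have hdr : (d : ℝ) ≤ r := by exact_mod_cast hsd.le.trans' (Nat.le_add_left d s)
  have hkE : k ≤ E * r := by rw [hE]; nlinarith
  have hk : 2 ≤ k := by
    have : (2 : ℝ) ≤ k := by nlinarith
    exact_mod_cast this
  have hkEpos : 0 < k * E / 100 := by positivity
  let m := ⌈exp (E / 500)⌉₊
  let q := ⌈(8 * r / d : ℝ)⌉₊
  let j := ⌈k * E / 100⌉₊
  have hm : 0 < m := Nat.ceil_pos.2 (exp_pos _)
  have hq : 0 < q := Nat.ceil_pos.2 (by positivity)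
  have : NeZero m := ⟨hm.ne'⟩
  have : NeZero q := ⟨hq.ne'⟩
  have hqE : q * E ≤ 9 * k := by
    have hceil : (q : ℝ) < 8 * r / d + 1 := Nat.ceil_lt_add_one (by positivity)
    have hone : 1 ≤ (r / d : ℝ) := (one_le_div hdpos).2 hdr
    calc q * E ≤ (8 * r / d + r / d) * E := by
          gcongr
          linarith
      _ = 9 * (E * r) / d := by ring
      _ = 9 * k := by rw [hE]; field_simp
  refine not_hasSetColouringRamsey (m := m) (q := q) (j := j) (t := E / 1000) hsd hk
    (by positivity) ?_ ?_ ?_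
  · exact (mul_mul_exp_le_exp (by linarith) hE0 hrE hkE).trans (Nat.le_ceil _)
  · convert mul_exp_lt_log_two (by nlinarith) hn using 4
    ring
  · have hsparse := sparse_failure_le (by lia) hd0 hd hkE hn (Nat.ceil_pos.2 hkEpos)
      (Nat.le_ceil _) hq ((div_le_iff₀' hdpos).1 (Nat.le_ceil _))
    have hdense := dense_failure_le (by lia) hk hE0 hrE (cast_ceil_exp_le (by positivity))
      (Nat.ceil_lt_add_one hkEpos.le).le hq hqE
    linarith [exp_neg_two_lt_one_fourth]

end Numerics

end SetColouring

theorem setRamsey_lower_bound :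
    ∃ C > (0 : ℝ), ∃ δ > (0 : ℝ), ∀ r s k : ℕ, s < r → 1 ≤ s →
      (s : ℝ) ≤ (r : ℝ) - C * Real.log r →
      (k : ℝ) ≥ (C / (((r : ℝ) - s) / r)) * Real.log r →
      (setRamsey r s k : ℝ) ≥ Real.exp (δ * k * ((r : ℝ) - s) ^ 2 / r) := by
  refine ⟨10 ^ 8, by norm_num, 1 / 16000, by norm_num, fun r s k hsr hs hd hk => ?_⟩
  have hcast : ((r - s : ℕ) : ℝ) = r - s := Nat.cast_sub hsr.le
  have hd0 : (0 : ℝ) < r - s := sub_pos.2 (Nat.cast_lt.2 hsr)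
  have hr0 : (0 : ℝ) < r := (Nat.cast_nonneg s).trans_lt (Nat.cast_lt.2 hsr)
  have hramsey : HasSetColouringRamsey r s k (setRamsey r s k) :=
    Nat.sInf_mem (SetColouring.exists_hasSetColouringRamsey hs r k)
  by_contra! hlt
  refine SetColouring.not_hasSetColouringRamsey_of_le_exp (d := r - s) (E := (r - s) * k / r)
    (by lia) (by lia) (by rw [hcast]; field_simp) (by linarith) ?_ ?_ hramsey
  · rw [div_div_eq_mul_div, div_mul_eq_mul_div, ge_iff_le, div_le_iff₀' hd0] at hk
    rw [le_div_iff₀ hr0]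
    linarith
  · refine hlt.le.trans_eq (congrArg Real.exp ?_)
    rw [hcast]
    ring
end

section
/- For every real δ > 0 there exist constants a > 0 and A > 0 such that for all integers r > s ≥ 1 with r ≥ 3, setting ε = (r − s)/r, and for every integer k ≥ (1 + δ)/ε + 1, one has exp(a·ε²·r·k / log r) ≤ R_{r,s}(k) ≤ exp(A·ε²·r·k·log r). -/
/-!
Write `d = r - s` and `E = d * k / r`, so that `ε² r k = E d`, and think of every edge as missing
`d` of the `r` colours.

*Upper bound.* Suppose no colour contains a clique of size `k`, and let `d ≤ r / 4`. Averaging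
over the colours not treated so far, some colour is missing from only an `O(ε)` proportion of the
pairs of the current vertex set. In such a dense graph a positive proportion of the vertices have
`O(E)` non-neighbours each in some clique `I` that no clique among them exceeds, and those sharing
the same set `Q` of non-neighbours in `I` span no clique larger than `Q`. Passing to the most
popular `Q` costs a factor `exp (O(E log r))` and leaves cliques of size `O(E)` only. After
doing so for `2 d` colours, every edge still has at least half of these colours, and the
Erdős–Szekeres argument bounds what is left by `2 ^ O(d E)`. If `d > r / 4`, the `r`-colour
Erdős–Szekeres bound `r ^ (r k)` is good enough.

*Lower bound.* It suffices to choose at most `d` missing colours at every edge so that every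
colour is missing somewhere in every `k`-set. If `E = O(log r)`, colour `i` is missing inside the
classes of a random partition into `k - 1` classes, independently for every `i`. If
`d = O(log r)`, the colours are grouped into blocks of size `d` and a random block is missing at
every edge. Otherwise every colour has its own random map to a set of about `exp (c E)` points, and
is missing at the preimages of a random sparse set of pairs of points, as well as at the collapsed
edges; edges for which this gives more than `d` colours lose only the colours that collapse
them, and are too few to matter.
-/

open Finset Function Real
open scoped BigOperators

section UniformProbability

variable {Ω β : Type*} [Fintype Ω] {p q : Ω → Prop}

open scoped Classical in
/-- The probability of the event `p` when `ω` is drawn uniformly from the finite type `Ω`. -/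
noncomputable def unifProb (p : Ω → Prop) : ℝ := 𝔼 ω, if p ω then 1 else 0

lemma unifProb_le_expect {X : Ω → ℝ} (hX : ∀ ω, 0 ≤ X ω) (h : ∀ ω, p ω → 1 ≤ X ω) :
    unifProb p ≤ 𝔼 ω, X ω := by
  refine expect_le_expect fun ω _ ↦ ?_
  split_ifs with hω
  exacts [h ω hω, hX ω]

lemma unifProb_le_exp_mul_expect_exp {X : Ω → ℝ} {y : ℝ} (h : ∀ ω, p ω → y ≤ X ω) :
    unifProb p ≤ exp (-y) * 𝔼 ω, exp (X ω) := by
  rw [mul_expect]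
  refine unifProb_le_expect (fun ω ↦ by positivity) fun ω hω ↦ ?_
  rw [← exp_add, one_le_exp_iff]
  linarith [h ω hω]

lemma unifProb_exists_le {B : Finset β} {bad : β → Ω → Prop} {x : ℝ}
    (h : ∀ b ∈ B, unifProb (bad b) ≤ x) : unifProb (fun ω ↦ ∃ b ∈ B, bad b ω) ≤ #B * x := by
  classical
  calc unifProb (fun ω ↦ ∃ b ∈ B, bad b ω)
      ≤ 𝔼 ω, ∑ b ∈ B, if bad b ω then (1 : ℝ) else 0 := by
        refine unifProb_le_expect (fun ω ↦ sum_nonneg fun b _ ↦ by positivity) ?_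
        rintro ω ⟨b, hb, hbad⟩
        calc (1 : ℝ) = if bad b ω then 1 else 0 := (if_pos hbad).symm
          _ ≤ _ := single_le_sum (f := fun b ↦ if bad b ω then (1 : ℝ) else 0)
            (fun b _ ↦ by positivity) hb
    _ = ∑ b ∈ B, unifProb (bad b) := expect_sum_comm ..
    _ ≤ #B * x := by simpa using sum_le_card_nsmul B _ x h

lemma exists_not_of_unifProb_lt_one [Nonempty Ω] (h : unifProb p < 1) : ∃ ω, ¬p ω := by
  by_contra! hp
  simp [unifProb, hp] at h

lemma unifProb_or_le : unifProb (fun ω ↦ p ω ∨ q ω) ≤ unifProb p + unifProb q := by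
  classical
  rw [unifProb, unifProb, unifProb, ← expect_add_distrib]
  refine expect_le_expect fun ω _ ↦ ?_
  by_cases hp : p ω <;> by_cases hq : q ω <;> simp [hp, hq]

lemma exists_not_and_not_of_unifProb_add_lt_one [Nonempty Ω] (h : unifProb p + unifProb q < 1) :
    ∃ ω, ¬p ω ∧ ¬q ω := by
  simpa only [not_or] using exists_not_of_unifProb_lt_one (unifProb_or_le.trans_lt h)

end UniformProbability

section ProductSpace

variable {ι κ : Type*} [Fintype ι] [DecidableEq ι] [Fintype κ]

lemma expect_prod_apply (f : ι → κ → ℝ) : 𝔼 ω : ι → κ, ∏ i, f i (ω i) = ∏ i, 𝔼 a, f i a := by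
  simp_rw [Fintype.expect_eq_sum_div_card, prod_div_distrib, prod_univ_sum, Fintype.piFinset_univ]
  simp

lemma expect_update (F : (ι → κ) → ℝ) (i : ι) : 𝔼 ω, F ω = 𝔼 ω, 𝔼 a, F (update ω i a) := by
  have split (G : (ι → κ) → ℝ) :
      𝔼 ω, G ω = 𝔼 ω', 𝔼 a, G ((Equiv.funSplitAt i κ).symm (a, ω')) := by
    rw [expect_comm, Fintype.expect_equiv (Equiv.funSplitAt i κ) G
      (fun x ↦ G ((Equiv.funSplitAt i κ).symm x)) (fun ω ↦ by rw [Equiv.symm_apply_apply]),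
      ← univ_product_univ, expect_product]
  rcases isEmpty_or_nonempty κ with hκ | hκ
  · have : IsEmpty (ι → κ) := ⟨fun ω ↦ hκ.false (ω i)⟩
    simp
  have update_symm (b : κ) (ω' : {j // j ≠ i} → κ) (a : κ) :
      update ((Equiv.funSplitAt i κ).symm (b, ω')) i a = (Equiv.funSplitAt i κ).symm (a, ω') := by
    ext j
    obtain rfl | hj := eq_or_ne j i <;> simp [*]
  rw [split, split fun ω ↦ 𝔼 a, F (update ω i a)]
  simp_rw [update_symm, Fintype.expect_const]

variable [DecidableEq κ]

lemma expect_one_add_mul_ite_mem [Nonempty κ] (K : Finset κ) (z : ℝ) :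
    (𝔼 a, (1 + z * if a ∈ K then 1 else 0) : ℝ) = 1 + z * #K / Fintype.card κ := by
  rw [expect_add_distrib, ← mul_expect, Fintype.expect_const, Fintype.expect_eq_sum_div_card]
  simp [mul_div_assoc]

variable [Nonempty κ]

lemma expect_exp_mul_card_filter_le (T : Finset ι) (a : κ) (θ : ℝ) :
    𝔼 ω : ι → κ, exp (θ * #{t ∈ T | ω t = a}) ≤
      exp (#T * ((exp θ - 1) / Fintype.card κ)) := by
  have weight (ω : ι → κ) : exp (θ * #{t ∈ T | ω t = a}) =
      ∏ t, if t ∈ T then 1 + (exp θ - 1) * (if ω t ∈ ({a} : Finset κ) then 1 else 0) else 1 := by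
    rw [Fintype.prod_ite_mem, mul_comm, exp_nat_mul, ← prod_const, prod_filter]
    refine prod_congr rfl fun t _ ↦ ?_
    split_ifs <;> simp_all
  calc 𝔼 ω : ι → κ, exp (θ * #{t ∈ T | ω t = a})
      = ∏ t, if t ∈ T then 1 + (exp θ - 1) / Fintype.card κ else 1 := by
        simp_rw [weight]
        rw [expect_prod_apply fun t b ↦
          if t ∈ T then 1 + (exp θ - 1) * (if b ∈ ({a} : Finset κ) then 1 else 0) else 1]
        refine prod_congr rfl fun t _ ↦ ?_
        split_ifs
        · rw [expect_one_add_mul_ite_mem]; simp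
        · simp
    _ = (1 + (exp θ - 1) / Fintype.card κ) ^ #T := by rw [Fintype.prod_ite_mem, prod_const]
    _ ≤ exp (#T * ((exp θ - 1) / Fintype.card κ)) := by
        rw [exp_nat_mul]
        gcongr
        · have : (1 : ℝ) / Fintype.card κ ≤ 1 :=
            div_le_self zero_le_one (mod_cast Fintype.card_pos)
          have : 0 < exp θ / Fintype.card κ := by positivity
          rw [sub_div]
          linarith
        · linarith [add_one_le_exp ((exp θ - 1) / Fintype.card κ)]

lemma unifProb_card_filter_lt_le (T : Finset ι) (a : κ) (e : ℝ) :
    unifProb (fun ω : ι → κ ↦ #{t ∈ T | ω t = a} < e) ≤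
      exp (e - #T / (2 * Fintype.card κ)) := by
  have exp_neg_one : exp (-1) - 1 ≤ -1 / 2 := by linarith [exp_neg_one_lt_half]
  calc _ ≤ exp (-(-e)) * 𝔼 ω : ι → κ, exp (-1 * #{t ∈ T | ω t = a}) :=
        unifProb_le_exp_mul_expect_exp fun ω hω ↦ by linarith
    _ ≤ exp (-(-e)) * exp (#T * ((-1 / 2) / Fintype.card κ)) := by
        gcongr
        exact (expect_exp_mul_card_filter_le T a _).trans (by gcongr)
    _ = _ := by rw [← exp_add]; congr 1; field_simp; ring

lemma unifProb_le_card_filter_le (T : Finset ι) (a : κ) (e : ℝ) :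
    unifProb (fun ω : ι → κ ↦ e ≤ #{t ∈ T | ω t = a}) ≤
      exp (6.4 * #T / Fintype.card κ - 2 * e) := by
  have exp_two : exp 2 - 1 ≤ 6.4 := by
    have := exp_one_lt_d9
    have : exp 2 = exp 1 ^ 2 := by rw [← exp_nat_mul]; norm_num
    nlinarith [exp_pos 1]
  calc _ ≤ exp (-(2 * e)) * 𝔼 ω : ι → κ, exp (2 * #{t ∈ T | ω t = a}) :=
        unifProb_le_exp_mul_expect_exp fun ω hω ↦ by linarith
    _ ≤ exp (-(2 * e)) * exp (#T * (6.4 / Fintype.card κ)) := by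
        gcongr
        exact (expect_exp_mul_card_filter_le T a _).trans (by gcongr)
    _ = _ := by rw [← exp_add]; congr 1; ring

end ProductSpace

section Collisions

variable {ι V κ : Type*} [DecidableEq κ]

lemma expect_exp_mul_card_sub_card_image_le [Fintype V] [DecidableEq V] [Fintype κ] [Nonempty κ]
    (S : Finset V) {θ : ℝ} (hθ : 0 ≤ θ) :
    𝔼 g : V → κ, exp (θ * ↑(#S - #(S.image g))) ≤
      exp ((#S).choose 2 * ((exp θ - 1) / Fintype.card κ)) := by
  have one_le : 1 ≤ exp θ := one_le_exp hθ
  induction S using Finset.induction_on with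
  | empty => simp
  | insert v S hv ih =>
    have resample (g : V → κ) (a : κ) :
        exp (θ * ↑(#(insert v S) - #((insert v S).image (update g v a)))) =
          exp (θ * ↑(#S - #(S.image g))) *
            (1 + (exp θ - 1) * if a ∈ S.image g then 1 else 0) := by
      have image_eq : (insert v S).image (update g v a) = insert a (S.image g) := by
        rw [image_insert, update_self]
        congr 1
        exact image_congr fun x hx ↦ update_of_ne (ne_of_mem_of_not_mem hx hv) ..
      have := card_image_le (s := S) (f := g)
      rw [image_eq, card_insert_of_notMem hv]
      split_ifs with ha
      · rw [insert_eq_of_mem ha, Nat.sub_add_comm this, Nat.cast_add_one, mul_add, exp_add]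
        ring_nf
      · rw [card_insert_of_notMem ha, Nat.add_sub_add_right]
        ring
    calc _ = 𝔼 g : V → κ, exp (θ * ↑(#S - #(S.image g))) *
          (1 + (exp θ - 1) * #(S.image g) / Fintype.card κ) := by
          rw [expect_update _ v]
          simp_rw [resample, ← mul_expect, expect_one_add_mul_ite_mem]
      _ ≤ 𝔼 g : V → κ, exp (θ * ↑(#S - #(S.image g))) *
          exp (#S * ((exp θ - 1) / Fintype.card κ)) := by
          gcongr with g
          have : (#(S.image g) : ℝ) ≤ #S := mod_cast card_image_le
          calc 1 + (exp θ - 1) * #(S.image g) / Fintype.card κ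
              ≤ 1 + (exp θ - 1) * #S / Fintype.card κ := by gcongr
            _ ≤ exp ((exp θ - 1) * #S / Fintype.card κ) := by
                linarith [add_one_le_exp ((exp θ - 1) * #S / Fintype.card κ)]
            _ = _ := by ring_nf
      _ ≤ _ := by
          rw [← expect_mul, card_insert_of_notMem hv, Nat.choose_succ_succ', Nat.choose_one_right,
            add_comm, Nat.cast_add, add_mul, exp_add]
          gcongr

variable [Fintype ι]

/-- The number of vertices of `S` lost, summed over all the maps `φ i`, when `S` is replaced by its
image under `φ i`. It vanishes exactly when every `φ i` is injective on `S`. -/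
def collisions (φ : ι → V → κ) (S : Finset V) : ℕ := ∑ i, (#S - #(S.image (φ i)))

lemma collisions_pair [DecidableEq V] (φ : ι → V → κ) {u v : V} (huv : u ≠ v) :
    collisions φ {u, v} = #{i | φ i u = φ i v} := by
  rw [collisions, card_filter]
  refine sum_congr rfl fun i _ ↦ ?_
  rw [image_insert, image_singleton, card_pair huv]
  split_ifs with h
  · simp [h]
  · rw [card_pair h]

lemma unifProb_le_collisions_le [DecidableEq ι] [Fintype V] [DecidableEq V] [Fintype κ]
    [Nonempty κ] (S : Finset V) {θ : ℝ} (hθ : 0 ≤ θ) (x : ℝ) :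
    unifProb (fun φ : ι → V → κ ↦ x ≤ collisions φ S) ≤
      exp (Fintype.card ι * ((#S).choose 2 * ((exp θ - 1) / Fintype.card κ)) - θ * x) := by
  have split (φ : ι → V → κ) :
      exp (θ * collisions φ S) = ∏ i, exp (θ * ↑(#S - #(S.image (φ i)))) := by
    rw [collisions, Nat.cast_sum, mul_sum, exp_sum]
  calc _ ≤ exp (-(θ * x)) * 𝔼 φ : ι → V → κ, exp (θ * collisions φ S) :=
        unifProb_le_exp_mul_expect_exp fun φ hφ ↦ by gcongr
    _ ≤ exp (-(θ * x)) *
          exp ((#S).choose 2 * ((exp θ - 1) / Fintype.card κ)) ^ Fintype.card ι := by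
        simp_rw [split]
        rw [expect_prod_apply fun _ (g : V → κ) ↦ exp (θ * ↑(#S - #(S.image g))), prod_const,
          card_univ]
        gcongr
        exact expect_exp_mul_card_sub_card_image_le S hθ
    _ = _ := by rw [← exp_nat_mul, ← exp_add]; congr 1; ring

end Collisions

section Pairs

variable {α β : Type*} [DecidableEq α]

/-- The edges of the complete graph on the vertex set `S`. -/
def pairs (S : Finset α) : Finset (Sym2 α) := S.offDiag.image fun p ↦ s(p.1, p.2)

lemma card_pairs (S : Finset α) : #(pairs S) = (#S).choose 2 := Sym2.card_image_offDiag S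

lemma mk_mem_pairs {S : Finset α} {u v : α} : s(u, v) ∈ pairs S ↔ u ∈ S ∧ v ∈ S ∧ u ≠ v := by
  simp only [pairs, mem_image, mem_offDiag, Prod.exists, Sym2.eq_iff]
  aesop

lemma pairs_mono {S T : Finset α} (h : S ⊆ T) : pairs S ⊆ pairs T := by
  intro e
  induction e with
  | _ u v => simp only [mk_mem_pairs]; exact fun ⟨hu, hv, huv⟩ ↦ ⟨h hu, h hv, huv⟩

lemma pairs_image [DecidableEq β] {S : Finset α} {g : α → β} (hg : Set.InjOn g S) :
    pairs (S.image g) = (pairs S).image (Sym2.map g) := by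
  ext e
  induction e with
  | _ u v =>
    simp only [mk_mem_pairs, mem_image]
    constructor
    · rintro ⟨⟨x, hx, rfl⟩, ⟨y, hy, rfl⟩, hxy⟩
      exact ⟨s(x, y), mk_mem_pairs.2 ⟨hx, hy, ne_of_apply_ne g hxy⟩, rfl⟩
    · rintro ⟨e, he, h⟩
      induction e with
      | _ x y =>
        obtain ⟨hx, hy, hxy⟩ := mk_mem_pairs.1 he
        rw [Sym2.map_mk, Sym2.eq_iff] at h
        rcases h with ⟨rfl, rfl⟩ | ⟨rfl, rfl⟩
        · exact ⟨⟨x, hx, rfl⟩, ⟨y, hy, rfl⟩, hg.ne hx hy hxy⟩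
        · exact ⟨⟨y, hy, rfl⟩, ⟨x, hx, rfl⟩, hg.ne hy hx hxy.symm⟩

lemma injOn_map_pairs {S : Finset α} {g : α → β} (hg : Set.InjOn g S) :
    Set.InjOn (Sym2.map g) (pairs S) := by
  classical
  rw [← card_image_iff, ← pairs_image hg, card_pairs, card_pairs, card_image_of_injOn hg]

end Pairs

section Counting

lemma card_filter_mul_le_sum {V : Type*} (W : Finset V) {f : V → ℝ} (hf : ∀ v, 0 ≤ f v) (t : ℝ) :
    #{v ∈ W | t ≤ f v} * t ≤ ∑ v ∈ W, f v := by
  calc #{v ∈ W | t ≤ f v} * t ≤ ∑ v ∈ W with t ≤ f v, f v := by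
        rw [← nsmul_eq_mul]
        exact card_nsmul_le_sum _ _ _ fun v hv ↦ (mem_filter.1 hv).2
    _ ≤ ∑ v ∈ W, f v := sum_le_sum_of_subset_of_nonneg (filter_subset ..) fun v _ _ ↦ hf v

lemma choose_le_exp_one_mul_div_pow (a b : ℕ) : (a.choose b : ℝ) ≤ (exp 1 * a / b) ^ b := by
  rcases b.eq_zero_or_pos with rfl | hb
  · simp
  have factorial_ge : ((b : ℝ) / exp 1) ^ b ≤ b.factorial := by
    have := pow_div_factorial_le_exp b (Nat.cast_nonneg b) b
    rw [div_le_iff₀ (by positivity)] at this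
    rw [div_pow, ← exp_nat_mul, mul_one]
    rw [div_le_iff₀ (by positivity)]
    linarith
  calc (a.choose b : ℝ) ≤ a ^ b / b.factorial := Nat.choose_le_pow_div b a
    _ ≤ a ^ b / ((b : ℝ) / exp 1) ^ b := by gcongr
    _ = (exp 1 * a / b) ^ b := by rw [← div_pow]; congr 1; field_simp

lemma choose_two_le_sq_div_two (k : ℕ) : (k.choose 2 : ℝ) ≤ k ^ 2 / 2 := by
  rw [Nat.cast_choose_two]
  nlinarith [(Nat.cast_nonneg k : (0 : ℝ) ≤ k)]

lemma sq_le_four_mul_choose_two {k : ℕ} (hk : 2 ≤ k) : (k : ℝ) ^ 2 ≤ 4 * k.choose 2 := by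
  have : (2 : ℝ) ≤ k := mod_cast hk
  rw [Nat.cast_choose_two]
  nlinarith

lemma one_le_log_of_three_le {x : ℝ} (hx : 3 ≤ x) : 1 ≤ log x := by
  rw [le_log_iff_exp_le (by linarith)]
  linarith [exp_one_lt_d9]

end Counting

section Ramsey

variable {V ι : Type*}

/-- The graph formed by the edges whose colour set under `χ` contains `i`. -/
def colourGraph (χ : Sym2 V → Finset ι) (i : ι) : SimpleGraph V := .fromEdgeSet {e | i ∈ χ e}

lemma colourGraph_adj {χ : Sym2 V → Finset ι} {i : ι} {u v : V} :
    (colourGraph χ i).Adj u v ↔ i ∈ χ s(u, v) ∧ u ≠ v := SimpleGraph.fromEdgeSet_adj _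

variable [DecidableEq ι] {χ : Sym2 V → Finset ι} {D : Finset ι} {W : Finset V}
  {c : ℕ}

lemma exists_popular_colour [DecidableEq V] (hD : D.Nonempty) {v : V} (hv : v ∈ W)
    (hχ : ∀ w ∈ W, w ≠ v → #D ≤ c * #{i ∈ D | i ∈ χ s(v, w)}) :
    ∃ i ∈ D, #W ≤ c * #{w ∈ W.erase v | i ∈ χ s(v, w)} + 1 := by
  have sum_le : ∑ _i ∈ D, #(W.erase v) ≤ ∑ i ∈ D, c * #{w ∈ W.erase v | i ∈ χ s(v, w)} := by
    calc ∑ _i ∈ D, #(W.erase v) = ∑ _w ∈ W.erase v, #D := by simp [mul_comm]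
      _ ≤ ∑ w ∈ W.erase v, c * #{i ∈ D | i ∈ χ s(v, w)} :=
          sum_le_sum fun w hw ↦ hχ w (mem_of_mem_erase hw) (ne_of_mem_erase hw)
      _ = ∑ i ∈ D, c * #{w ∈ W.erase v | i ∈ χ s(v, w)} := by
          rw [← mul_sum, ← mul_sum]
          congr 1
          exact sum_card_bipartiteAbove_eq_sum_card_bipartiteBelow _
  obtain ⟨i, hi, hle⟩ := exists_le_of_sum_le hD sum_le
  exact ⟨i, hi, by rw [card_erase_of_mem hv] at hle; omega⟩

/-- The Erdős–Szekeres argument: passing to the neighbourhood of a vertex in a popular colour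
costs a factor `c` and lowers the clique bound of that colour by one. -/
theorem card_lt_pow_sum_of_cliqueFreeOn (hD : D.Nonempty) (hc : 2 ≤ c) {f : ι → ℕ}
    (hχ : ∀ u ∈ W, ∀ v ∈ W, u ≠ v → #D ≤ c * #{i ∈ D | i ∈ χ s(u, v)})
    (hf : ∀ i ∈ D, (colourGraph χ i).CliqueFreeOn W (f i + 1)) :
    #W < c ^ ∑ i ∈ D, f i := by
  classical
  induction hn : ∑ i ∈ D, f i generalizing W f with
  | zero =>
    obtain ⟨i, hi⟩ := hD
    have hfi := hf i hi
    rw [sum_eq_zero_iff.1 hn i hi, zero_add] at hfi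
    have W_empty : W = ∅ := eq_empty_of_forall_notMem fun v hv ↦
      hfi (t := {v}) (by simpa using hv) (by simp)
    simp [W_empty]
  | succ n ih =>
    obtain rfl | ⟨v, hv⟩ := W.eq_empty_or_nonempty
    · exact pow_pos (by omega) _
    obtain ⟨i, hi, hle⟩ := exists_popular_colour hD hv fun w hw hwv ↦ hχ v hv w hw hwv.symm
    have neighbours_lt : #{w ∈ W.erase v | i ∈ χ s(v, w)} < c ^ n := by
      have hfi : f i ≠ 0 := fun h0 ↦ hf i hi (t := {v}) (by simpa using hv) (by simp [h0])
      refine ih (f := update f i (f i - 1)) (fun u hu w hw ↦ hχ u ?_ w ?_) (fun j hj ↦ ?_) ?_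
      · exact mem_of_mem_erase (mem_filter.1 hu).1
      · exact mem_of_mem_erase (mem_filter.1 hw).1
      · obtain rfl | hji := eq_or_ne j i
        · rw [update_self, Nat.sub_add_cancel (Nat.one_le_iff_ne_zero.2 hfi)]
          refine (SimpleGraph.CliqueFreeOn.of_succ _ (hf j hj) hv).subset _ fun w hw ↦ ?_
          simp only [coe_filter, mem_erase, Set.mem_ofPred_eq] at hw
          exact ⟨hw.1.2, colourGraph_adj.2 ⟨hw.2, hw.1.1.symm⟩⟩
        · rw [update_of_ne hji]
          exact (hf j hj).subset _ fun w hw ↦ mem_of_mem_erase (mem_filter.1 hw).1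
      · rw [sum_update_of_mem hi]
        have := sum_eq_add_sum_sdiff_singleton_of_mem hi f
        omega
    calc #W ≤ c * #{w ∈ W.erase v | i ∈ χ s(v, w)} + 1 := hle
      _ < c * (#{w ∈ W.erase v | i ∈ χ s(v, w)} + 1) := by rw [mul_add]; omega
      _ ≤ c * c ^ n := by gcongr; exact neighbours_lt
      _ = c ^ (n + 1) := (pow_succ' c n).symm

end Ramsey

section DenseGraph

variable {V : Type*} {G : SimpleGraph V} {W I S : Finset V} {x η : ℝ} {k p : ℕ}

lemma card_le_two_mul_card_filter_lt {f : V → ℝ} (hf : ∀ v, 0 ≤ f v) (hη : 0 < η)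
    (h : ∑ v ∈ W, f v ≤ η * #W ^ 2) : (#W : ℝ) ≤ 2 * #{v ∈ W | f v < 2 * η * #W} := by
  obtain rfl | hW := W.eq_empty_or_nonempty
  · simp
  have few : (#{v ∈ W | 2 * η * #W ≤ f v} : ℝ) ≤ #W / 2 := by
    have : (0 : ℝ) < #W := mod_cast hW.card_pos
    refine le_of_mul_le_mul_right (a := 2 * η * #W) ?_ (by positivity)
    calc _ ≤ η * #W ^ 2 := (card_filter_mul_le_sum W hf _).trans h
      _ = _ := by ring
  have split := card_filter_add_card_filter_not (s := W) fun v ↦ f v < 2 * η * #W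
  simp_rw [not_lt] at split
  have split : (#{v ∈ W | f v < 2 * η * #W} : ℝ) + #{v ∈ W | 2 * η * #W ≤ f v} = #W :=
    mod_cast split
  linarith

lemma card_lt_of_isClique_of_cliqueFreeOn (hk : G.CliqueFreeOn W k) (hIW : I ⊆ W)
    (hI : G.IsClique I) : #I < k := by
  by_contra! h
  obtain ⟨J, hJI, hJ⟩ := exists_subset_card_eq h
  exact hk (coe_subset.2 (hJI.trans hIW)) ⟨hI.subset (coe_subset.2 hJI), hJ⟩

lemma card_subsets_card_le (I : Finset V) (hx : 1 ≤ x) (p : ℕ) :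
    (#{Q ∈ I.powerset | #Q ≤ p} : ℝ) ≤ x ^ p * (1 + x⁻¹) ^ #I := by
  calc (#{Q ∈ I.powerset | #Q ≤ p} : ℝ) = ∑ Q ∈ I.powerset with #Q ≤ p, 1 := by simp
    _ ≤ ∑ Q ∈ I.powerset with #Q ≤ p, x ^ p * x⁻¹ ^ #Q := by
        refine sum_le_sum fun Q hQ ↦ ?_
        rw [inv_pow, ← div_eq_mul_inv, one_le_div (by positivity)]
        exact pow_le_pow_right₀ hx (mem_filter.1 hQ).2
    _ ≤ ∑ Q ∈ I.powerset, x ^ p * x⁻¹ ^ #Q :=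
        sum_le_sum_of_subset_of_nonneg (filter_subset ..) fun _ _ _ ↦ by positivity
    _ = x ^ p * (1 + x⁻¹) ^ #I := by
        rw [← mul_sum, add_comm, ← prod_const, prod_add_one]
        simp

lemma exists_max_clique (G : SimpleGraph V) (W : Finset V) :
    ∃ I ⊆ W, G.IsClique I ∧ ∀ J, J ⊆ W → G.IsClique J → #J ≤ #I := by
  classical
  obtain ⟨I, hI, hmax⟩ :=
    exists_max_image (W.powerset.filter fun J : Finset V ↦ G.IsClique (J : Set V)) card ⟨∅, by simp⟩
  simp only [mem_filter, mem_powerset, and_imp] at hI hmax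
  exact ⟨I, hI.1, hI.2, hmax⟩

variable [DecidableRel G.Adj]

lemma card_filter_le_card_nonadj_mul_le {m : ℝ} (hI : ∀ u ∈ I, #{v ∈ W | ¬G.Adj u v} ≤ m) (t : ℝ) :
    #{v ∈ W | t ≤ #{u ∈ I | ¬G.Adj u v}} * t ≤ #I * m := by
  calc #{v ∈ W | t ≤ #{u ∈ I | ¬G.Adj u v}} * t
      ≤ ∑ v ∈ W, (#{u ∈ I | ¬G.Adj u v} : ℝ) := card_filter_mul_le_sum W (by simp) t
    _ = ∑ u ∈ I, (#{v ∈ W | ¬G.Adj u v} : ℝ) := mod_cast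
        (sum_card_bipartiteAbove_eq_sum_card_bipartiteBelow fun u v ↦ ¬G.Adj u v).symm
    _ ≤ #I * m := by simpa using sum_le_card_nsmul I _ m hI

lemma card_le_two_mul_card_filter_card_nonadj_le {m : ℝ}
    (hI : ∀ u ∈ I, #{v ∈ W | ¬G.Adj u v} ≤ m) (hm : 2 * (#I * m) ≤ #W * (p + 1)) :
    (#W : ℝ) ≤ 2 * #{v ∈ W | #{u ∈ I | ¬G.Adj u v} ≤ p} := by
  have few : (#{v ∈ W | (p + 1 : ℝ) ≤ #{u ∈ I | ¬G.Adj u v}} : ℝ) ≤ #W / 2 := by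
    refine le_of_mul_le_mul_right (a := (p + 1 : ℝ)) ?_ (by positivity)
    linarith [card_filter_le_card_nonadj_mul_le hI (p + 1 : ℝ)]
  have split := card_filter_add_card_filter_not (s := W) fun v ↦ #{u ∈ I | ¬G.Adj u v} ≤ p
  simp_rw [not_le, Nat.lt_iff_add_one_le] at split
  have split : (#{v ∈ W | #{u ∈ I | ¬G.Adj u v} ≤ p} : ℝ) +
      #{v ∈ W | (p + 1 : ℝ) ≤ #{u ∈ I | ¬G.Adj u v}} = #W := mod_cast split
  linarith

lemma card_le_of_isMaxClique [DecidableEq V] (hI : G.IsClique I) (hS : G.IsClique S)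
    (hmax : ∀ J, J ⊆ I ∪ S → G.IsClique J → #J ≤ #I) {Q : Finset V}
    (hQ : ∀ v ∈ S, {u ∈ I | ¬G.Adj u v} = Q) : #S ≤ #Q := by
  obtain rfl | ⟨v, hv⟩ := S.eq_empty_or_nonempty
  · simp
  have Q_subset : Q ⊆ I := hQ v hv ▸ filter_subset ..
  have adj {u v : V} (hu : u ∈ I \ Q) (hv : v ∈ S) : G.Adj u v := by
    by_contra h
    rw [mem_sdiff, ← hQ v hv, mem_filter] at hu
    exact hu.2 ⟨hu.1, h⟩
  have disj : Disjoint (I \ Q) S :=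
    disjoint_left.2 fun u hu huS ↦ G.irrefl (adj hu huS)
  have := G.symm
  have clique : G.IsClique ↑(I \ Q ∪ S) := by
    rw [coe_union, SimpleGraph.isClique_iff, Set.pairwise_union_of_symm]
    exact ⟨hI.subset (coe_subset.2 sdiff_subset), hS, fun u hu v hv _ ↦ adj hu hv⟩
  have := hmax _ (union_subset_union_left sdiff_subset) clique
  rw [card_union_of_disjoint disj, card_sdiff_of_subset Q_subset] at this
  have := card_le_card Q_subset
  omega

lemma exists_card_le_mul_card_fiber_nonadj [DecidableEq V] (hx : 1 ≤ x)
    (hp : ∀ v ∈ W, #{u ∈ I | ¬G.Adj u v} ≤ p) :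
    ∃ Q : Finset V, #Q ≤ p ∧
      #W ≤ x ^ p * (1 + x⁻¹) ^ #I * #{v ∈ W | {u ∈ I | ¬G.Adj u v} = Q} := by
  set 𝒬 := {Q ∈ I.powerset | #Q ≤ p}
  have 𝒬_nonempty : 𝒬.Nonempty := ⟨∅, by simp [𝒬]⟩
  have 𝒬_pos : (0 : ℝ) < #𝒬 := mod_cast 𝒬_nonempty.card_pos
  obtain ⟨Q, hQ, hfiber⟩ := exists_le_card_fiber_of_nsmul_le_card_of_maps_to (s := W) (t := 𝒬)
    (f := fun v ↦ {u ∈ I | ¬G.Adj u v}) (b := (#W : ℝ) / #𝒬)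
    (fun v hv ↦ mem_filter.2 ⟨mem_powerset.2 (filter_subset ..), hp v hv⟩) 𝒬_nonempty
    (by rw [nsmul_eq_mul, mul_div_cancel₀ _ 𝒬_pos.ne'])
  rw [div_le_iff₀' 𝒬_pos] at hfiber
  exact ⟨Q, (mem_filter.1 hQ).2, hfiber.trans (by gcongr; exact card_subsets_card_le I hx p)⟩

/-- The vertices of `W'` are those sharing one small set `Q` of non-neighbours in a maximum
clique `I`: a clique of `W'` larger than `Q` could replace `Q` in `I`. -/
theorem exists_cliqueFreeOn_of_dense (hη : 0 < η) (hx : 1 ≤ x) (hk : G.CliqueFreeOn W k)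
    (hp : 8 * η * k ≤ p + 1) (hG : ∑ u ∈ W, (#{v ∈ W | ¬G.Adj u v} : ℝ) ≤ η * #W ^ 2) :
    ∃ W' ⊆ W, #W ≤ 4 * (x ^ p * (1 + x⁻¹) ^ k) * #W' ∧ G.CliqueFreeOn W' (p + 1) := by
  classical
  set W₀ := {u ∈ W | (#{v ∈ W | ¬G.Adj u v} : ℝ) < 2 * η * #W}
  have W₀_subset : W₀ ⊆ W := filter_subset ..
  have W₀_large : (#W : ℝ) ≤ 2 * #W₀ := card_le_two_mul_card_filter_lt (by simp) hη hG
  obtain ⟨I, hIW₀, hI, hmax⟩ := exists_max_clique G W₀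
  have hIk : #I ≤ k := (card_lt_of_isClique_of_cliqueFreeOn hk (hIW₀.trans W₀_subset) hI).le
  have nonadj_le (u : V) (hu : u ∈ I) : (#{v ∈ W₀ | ¬G.Adj u v} : ℝ) ≤ 2 * η * #W :=
    le_trans (by gcongr) (mem_filter.1 (hIW₀ hu)).2.le
  set U := {v ∈ W₀ | #{u ∈ I | ¬G.Adj u v} ≤ p}
  have U_large : (#W₀ : ℝ) ≤ 2 * #U := by
    refine card_le_two_mul_card_filter_card_nonadj_le nonadj_le ?_
    calc 2 * (#I * (2 * η * #W)) ≤ 2 * (k * (2 * η * (2 * #W₀))) := by gcongr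
      _ = #W₀ * (8 * η * k) := by ring
      _ ≤ #W₀ * (p + 1) := by gcongr
  obtain ⟨Q, hQ, hfiber⟩ :=
    exists_card_le_mul_card_fiber_nonadj (W := U) hx fun v hv ↦ (mem_filter.1 hv).2
  have fiber_subset : {v ∈ U | {u ∈ I | ¬G.Adj u v} = Q} ⊆ W₀ :=
    (filter_subset ..).trans (filter_subset ..)
  refine ⟨{v ∈ U | {u ∈ I | ¬G.Adj u v} = Q}, fiber_subset.trans W₀_subset, ?_,
    fun S hS hclique ↦ ?_⟩
  · have : x ^ p * (1 + x⁻¹) ^ #I ≤ x ^ p * (1 + x⁻¹) ^ k := by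
      gcongr
      exact le_add_of_nonneg_right (by positivity)
    calc (#W : ℝ) ≤ 4 * #U := by linarith
      _ ≤ 4 * (x ^ p * (1 + x⁻¹) ^ k * #{v ∈ U | {u ∈ I | ¬G.Adj u v} = Q}) := by
          gcongr
          exact hfiber.trans (by gcongr)
      _ = _ := by ring
  · have := card_le_of_isMaxClique hI hclique.isClique
      (fun J hJ ↦ hmax J (hJ.trans (union_subset hIW₀ ((coe_subset.1 hS).trans fiber_subset))))
      fun v hv ↦ (mem_filter.1 (coe_subset.1 hS hv)).2
    have := hclique.card_eq
    omega

end DenseGraph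

section FewMissingColours

variable {V ι : Type*} [Fintype ι] [DecidableEq ι] {χ : Sym2 V → Finset ι}
  {W : Finset V} {d k p : ℕ} {x : ℝ}

instance [DecidableEq V] (χ : Sym2 V → Finset ι) (i : ι) : DecidableRel (colourGraph χ i).Adj :=
  fun _ _ ↦ decidable_of_iff' _ colourGraph_adj

lemma exists_colour_few_nonadj [DecidableEq V] {C : Finset ι} (hC : C.Nonempty)
    (hχ : ∀ u v, u ≠ v → #(χ s(u, v))ᶜ ≤ d) :
    ∃ i ∈ C, #C * ∑ u ∈ W, #{v ∈ W | ¬(colourGraph χ i).Adj u v} ≤ d * #W ^ 2 + #C * #W := by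
  have nonadj_le (u v : V) :
      #{i ∈ C | ¬(colourGraph χ i).Adj u v} ≤ d + if u = v then #C else 0 := by
    split_ifs with h
    · exact (card_filter_le ..).trans (Nat.le_add_left ..)
    · refine (card_le_card fun i hi ↦ ?_).trans (hχ u v h)
      simp_all [colourGraph_adj]
  have total : ∑ i ∈ C, ∑ u ∈ W, #{v ∈ W | ¬(colourGraph χ i).Adj u v} ≤
      d * #W ^ 2 + #C * #W := by
    calc _ = ∑ u ∈ W, ∑ v ∈ W, #{i ∈ C | ¬(colourGraph χ i).Adj u v} := by
          rw [sum_comm]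
          exact sum_congr rfl fun u _ ↦ sum_card_bipartiteAbove_eq_sum_card_bipartiteBelow _
      _ ≤ ∑ u ∈ W, ∑ v ∈ W, (d + if u = v then #C else 0) :=
          sum_le_sum fun u _ ↦ sum_le_sum fun v _ ↦ nonadj_le u v
      _ = d * #W ^ 2 + #C * #W := by
          simp only [sum_add_distrib, sum_ite_eq, sum_ite_mem, sum_const, inter_self, smul_eq_mul]
          ring
  obtain ⟨i, hi, hle⟩ := exists_le_of_sum_le hC
    (f := fun i ↦ #C * ∑ u ∈ W, #{v ∈ W | ¬(colourGraph χ i).Adj u v})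
    (g := fun _ ↦ d * #W ^ 2 + #C * #W) (by rw [← mul_sum, sum_const, smul_eq_mul]; gcongr)
  exact ⟨i, hi, hle⟩

lemma exists_new_sparse_colour (hd : 0 < d) (hx : 1 ≤ x) (hχ : ∀ u v, u ≠ v → #(χ s(u, v))ᶜ ≤ d)
    (hfree : ∀ i, (colourGraph χ i).CliqueFree k) (hrk : Fintype.card ι ≤ d * k)
    (hp : 24 * (d / Fintype.card ι * k : ℝ) ≤ p + 1) (hkW : k ≤ #W) {D : Finset ι}
    (hD : 2 * #D < Fintype.card ι) :
    ∃ i ∉ D, ∃ W' ⊆ W, #W ≤ 4 * (x ^ p * (1 + x⁻¹) ^ k) * #W' ∧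
      (colourGraph χ i).CliqueFreeOn W' (p + 1) := by
  classical
  have card_compl : #Dᶜ + #D = Fintype.card ι := card_compl_add_card D
  have r_pos : (0 : ℝ) < Fintype.card ι := mod_cast by omega
  have C_large : (Fintype.card ι : ℝ) ≤ 2 * #Dᶜ := mod_cast by omega
  obtain ⟨i, hi, hle⟩ := exists_colour_few_nonadj (W := W) (C := Dᶜ)
    (card_pos.1 (by omega)) hχ
  refine ⟨i, mem_compl.1 hi, exists_cliqueFreeOn_of_dense (η := 3 * (d / Fintype.card ι))
    (by positivity) hx (hfree i).cliqueFreeOn (by linarith) ?_⟩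
  have W_large : (Fintype.card ι : ℝ) ≤ d * #W := mod_cast hrk.trans (by gcongr)
  have hle : (#Dᶜ : ℝ) * ∑ u ∈ W, (#{v ∈ W | ¬(colourGraph χ i).Adj u v} : ℝ) ≤
      d * #W ^ 2 + #Dᶜ * #W := mod_cast hle
  refine le_of_mul_le_mul_left (a := (#Dᶜ : ℝ)) (hle.trans ?_) (by linarith)
  rw [mul_div_assoc', div_mul_eq_mul_div, mul_div_assoc', le_div_iff₀ r_pos]
  calc (d * #W ^ 2 + #Dᶜ * #W : ℝ) * Fintype.card ι
      = d * #W ^ 2 * Fintype.card ι + #Dᶜ * #W * Fintype.card ι := by ring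
    _ ≤ d * #W ^ 2 * (2 * #Dᶜ) + #Dᶜ * #W * (d * #W) := by gcongr
    _ = #Dᶜ * (3 * d * #W ^ 2) := by ring

lemma exists_many_sparse_colours [Fintype V] (hd : 0 < d) (hx : 1 ≤ x)
    (hχ : ∀ u v, u ≠ v → #(χ s(u, v))ᶜ ≤ d) (hfree : ∀ i, (colourGraph χ i).CliqueFree k)
    (hrk : Fintype.card ι ≤ d * k) (hp : 24 * (d / Fintype.card ι * k : ℝ) ≤ p + 1)
    (j : ℕ) (hj : 2 * j ≤ Fintype.card ι) :
    ∃ W : Finset V, Fintype.card V ≤ (4 * (x ^ p * (1 + x⁻¹) ^ k)) ^ j * #W ∧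
      (#W < k ∨ ∃ D : Finset ι, #D = j ∧
        ∀ i ∈ D, (colourGraph χ i).CliqueFreeOn W (p + 1)) := by
  induction j with
  | zero => exact ⟨univ, by simp, .inr ⟨∅, by simp⟩⟩
  | succ j ih =>
    have X_ge : 1 ≤ 4 * (x ^ p * (1 + x⁻¹) ^ k) := by
      have : 1 ≤ x ^ p := one_le_pow₀ hx
      have : 1 ≤ (1 + x⁻¹) ^ k := one_le_pow₀ (le_add_of_nonneg_right (by positivity))
      nlinarith
    obtain ⟨W, hW, hcase⟩ := ih (by omega)
    by_cases hkW : #W < k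
    · refine ⟨W, hW.trans ?_, .inl hkW⟩
      gcongr ?_ * _
      exact pow_le_pow_right₀ X_ge j.le_succ
    obtain ⟨D, hD, hfreeD⟩ := hcase.resolve_left hkW
    obtain ⟨i, hiD, W', hW', hle, hfreei⟩ :=
      exists_new_sparse_colour hd hx hχ hfree hrk hp (not_lt.1 hkW) (D := D) (by omega)
    refine ⟨W', ?_, .inr ⟨insert i D, by rw [card_insert_of_notMem hiD, hD], ?_⟩⟩
    · rw [pow_succ, mul_assoc]
      exact hW.trans (by gcongr)
    · rw [forall_mem_insert]
      exact ⟨hfreei, fun i hi ↦ (hfreeD i hi).subset _ (coe_subset.2 hW')⟩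

theorem card_le_of_forall_cliqueFree [Fintype V] (hd : 0 < d) (hx : 1 ≤ x)
    (hχ : ∀ u v, u ≠ v → #(χ s(u, v))ᶜ ≤ d) (hfree : ∀ i, (colourGraph χ i).CliqueFree k)
    (hrk : Fintype.card ι ≤ d * k) (hp : 24 * (d / Fintype.card ι * k : ℝ) ≤ p + 1)
    (hdr : 4 * d ≤ Fintype.card ι) :
    Fintype.card V ≤ (4 * (x ^ p * (1 + x⁻¹) ^ k)) ^ (2 * d) * max (k : ℝ) (2 ^ (2 * d * p)) := by
  obtain ⟨W, hW, hWk | ⟨D, hD, hfreeD⟩⟩ :=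
    exists_many_sparse_colours hd hx hχ hfree hrk hp (2 * d) (by omega)
  · refine hW.trans ?_
    gcongr
    exact le_max_of_le_left (mod_cast hWk.le)
  · have redundant (u v : V) (huv : u ≠ v) : #D ≤ 2 * #{i ∈ D | i ∈ χ s(u, v)} := by
      have := card_filter_add_card_filter_not (s := D) fun i ↦ i ∈ χ s(u, v)
      have : #{i ∈ D | i ∉ χ s(u, v)} ≤ #(χ s(u, v))ᶜ :=
        card_le_card fun i hi ↦ mem_compl.2 (mem_filter.1 hi).2
      have := hχ u v huv
      omega
    have := card_lt_pow_sum_of_cliqueFreeOn (card_pos.1 (by omega)) le_rfl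
      (fun u _ v _ ↦ redundant u v) hfreeD
    rw [sum_const, hD, smul_eq_mul] at this
    refine hW.trans ?_
    gcongr
    exact le_max_of_le_right (mod_cast this.le)

end FewMissingColours

section UpperBound

variable {r s d k n p : ℕ} {E B : ℝ}

lemma hasSetColouringRamsey_of_colourGraph
    (h : ∀ χ : Sym2 (Fin n) → Finset (Fin r), (∀ u v, u ≠ v → #(χ s(u, v)) = s) →
      ∃ i, ¬(colourGraph χ i).CliqueFree k) :
    HasSetColouringRamsey r s k n := by
  intro χ hsymm hcard
  obtain ⟨i, hi⟩ := h (Sym2.lift ⟨χ, hsymm⟩) hcard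
  rw [SimpleGraph.CliqueFree] at hi
  push Not at hi
  obtain ⟨S, hS⟩ := hi
  exact ⟨S, i, hS.card_eq, fun u hu v hv huv ↦ (colourGraph_adj.1 (hS.isClique hu hv huv)).1⟩

lemma hasSetColouringRamsey_pow (hs : 1 ≤ s) (hr : 2 ≤ r) (k : ℕ) :
    HasSetColouringRamsey r s k (r ^ (r * k)) := by
  refine hasSetColouringRamsey_of_colourGraph fun χ hχ ↦ ?_
  by_contra! hfree
  have := card_lt_pow_sum_of_cliqueFreeOn (χ := χ) (D := univ) (W := univ) (c := r) (f := fun _ ↦ k)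
    (card_pos.1 (by rw [card_univ, Fintype.card_fin]; omega)) hr
    (fun u _ v _ huv ↦ by
      rw [card_univ, Fintype.card_fin, filter_univ_mem, hχ u v huv]
      exact Nat.le_mul_of_pos_right r hs)
    (fun i _ ↦ ((hfree i).mono k.le_succ).cliqueFreeOn)
  simp at this

lemma setRamsey_le_add_one (hB : 0 ≤ B) (h : ∀ n : ℕ, B < n → HasSetColouringRamsey r s k n) :
    setRamsey r s k ≤ B + 1 := by
  calc (setRamsey r s k : ℝ) ≤ (⌊B⌋₊ + 1 : ℕ) := by
        exact_mod_cast Nat.sInf_le (h _ (by exact_mod_cast Nat.lt_floor_add_one B))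
    _ ≤ B + 1 := by
        push_cast
        gcongr
        exact Nat.floor_le hB

lemma hasSetColouringRamsey_of_lt (hd : 0 < d) (hsd : s + d = r) (hE : E * r = d * k)
    (hEp : 24 * E ≤ p + 1) (hrk : r ≤ d * k) (hdr : 4 * d ≤ r)
    (hn : (4 * (r ^ p * (1 + (r : ℝ)⁻¹) ^ k)) ^ (2 * d) * max (k : ℝ) (2 ^ (2 * d * p)) < n) :
    HasSetColouringRamsey r s k n := by
  refine hasSetColouringRamsey_of_colourGraph fun χ hχ ↦ ?_
  by_contra! hfree
  have r_pos : (0 : ℝ) < r := mod_cast by omega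
  have := card_le_of_forall_cliqueFree (χ := χ) (x := r) (p := p) hd (mod_cast by omega)
    (fun u v huv ↦ by rw [card_compl, Fintype.card_fin, hχ u v huv]; omega) hfree
    (by simpa using hrk)
    (by rwa [Fintype.card_fin, div_mul_eq_mul_div, ← hE, mul_div_cancel_right₀ _ r_pos.ne'])
    (by simpa using hdr)
  rw [Fintype.card_fin] at this
  linarith

lemma sparse_colour_cost_le_exp (hr : 3 ≤ r) (hk : k ≤ E * r) (hE : 1 ≤ E) (hp : p ≤ 24 * E) :
    4 * (r ^ p * (1 + (r : ℝ)⁻¹) ^ k) ≤ exp (27 * (E * log r)) := by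
  have hlog : 1 ≤ log r := one_le_log_of_three_le (mod_cast hr)
  have r_pos : (0 : ℝ) < r := by positivity
  have four_le : (4 : ℝ) ≤ exp 2 := by
    have := add_one_le_exp (1 : ℝ)
    rw [show (2 : ℝ) = 1 + 1 by norm_num, exp_add]
    nlinarith
  have pow_r : (r : ℝ) ^ p = exp (p * log r) := by rw [exp_nat_mul, exp_log r_pos]
  have pow_one_add : (1 + (r : ℝ)⁻¹) ^ k ≤ exp E := by
    calc (1 + (r : ℝ)⁻¹) ^ k ≤ exp (r : ℝ)⁻¹ ^ k := by
          gcongr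
          linarith [add_one_le_exp (r : ℝ)⁻¹]
      _ = exp (k / r) := by rw [← exp_nat_mul, div_eq_mul_inv]
      _ ≤ exp E := by gcongr; rwa [div_le_iff₀ r_pos]
  calc 4 * (r ^ p * (1 + (r : ℝ)⁻¹) ^ k) ≤ exp 2 * (exp (p * log r) * exp E) := by
        rw [pow_r]; gcongr
    _ = exp (2 + (p * log r + E)) := by rw [exp_add, exp_add]
    _ ≤ exp (27 * (E * log r)) := by
        gcongr
        have : p * log r ≤ 24 * E * log r := by gcongr
        have : E ≤ E * log r := le_mul_of_one_le_right (by positivity) hlog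
        linarith

lemma max_two_pow_le_exp (hd : 0 < d) (hr : 3 ≤ r) (hk : k ≤ E * r) (hE : 1 ≤ E) (hp : p ≤ 24 * E) :
    max (k : ℝ) (2 ^ (2 * d * p)) ≤ exp (48 * (E * d * log r)) := by
  have hlog : 1 ≤ log r := one_le_log_of_three_le (mod_cast hr)
  have hd : (1 : ℝ) ≤ d := mod_cast hd
  have r_pos : (0 : ℝ) < r := by positivity
  refine max_le ?_ ?_
  · calc (k : ℝ) ≤ exp E * exp (log r) := by
          rw [exp_log r_pos]
          exact hk.trans (by gcongr; linarith [add_one_le_exp E])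
      _ = exp (E + log r) := (exp_add ..).symm
      _ ≤ exp (48 * (E * d * log r)) := by
          have : E ≤ E * d := le_mul_of_one_le_right (by positivity) hd
          have : E * d ≤ E * d * log r := le_mul_of_one_le_right (by positivity) hlog
          have : log r ≤ E * d * log r :=
            le_mul_of_one_le_left (by positivity) (one_le_mul_of_one_le_of_one_le hE hd)
          gcongr
          linarith
  · calc (2 : ℝ) ^ (2 * d * p) ≤ exp 1 ^ (2 * d * p) := by
          gcongr
          linarith [add_one_le_exp (1 : ℝ)]
      _ = exp (2 * d * p) := by rw [← exp_nat_mul]; simp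
      _ ≤ exp (2 * d * (24 * E * log r)) := by
          gcongr
          exact hp.trans (le_mul_of_one_le_right (by positivity) hlog)
      _ = exp (48 * (E * d * log r)) := by ring_nf

lemma setRamsey_le_exp_of_four_mul_le (hd : 0 < d) (hsd : s + d = r) (hdr : 4 * d ≤ r)
    (hr : 3 ≤ r) (hE : E * r = d * k) (hE1 : 1 ≤ E) :
    setRamsey r s k ≤ exp (103 * (E * d * log r)) := by
  have r_pos : (0 : ℝ) < r := by positivity
  have hd1 : (1 : ℝ) ≤ d := mod_cast hd
  have one_le : 1 ≤ E * d * log r := one_le_mul_of_one_le_of_one_le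
    (one_le_mul_of_one_le_of_one_le hE1 hd1) (one_le_log_of_three_le (mod_cast hr))
  have hk : k ≤ E * r := by rw [hE]; exact le_mul_of_one_le_left (by positivity) hd1
  have hrk : r ≤ d * k := by
    have : (r : ℝ) ≤ d * k := hE ▸ le_mul_of_one_le_left r_pos.le hE1
    exact_mod_cast this
  set p := ⌊24 * E⌋₊
  have hp : p ≤ 24 * E := Nat.floor_le (by positivity)
  calc (setRamsey r s k : ℝ)
      ≤ (4 * (r ^ p * (1 + (r : ℝ)⁻¹) ^ k)) ^ (2 * d) * max (k : ℝ) (2 ^ (2 * d * p)) + 1 :=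
        setRamsey_le_add_one (by positivity) fun n hn ↦
          hasSetColouringRamsey_of_lt hd hsd hE (Nat.lt_floor_add_one _).le hrk hdr hn
    _ ≤ exp (27 * (E * log r)) ^ (2 * d) * exp (48 * (E * d * log r)) + 1 := by
        gcongr
        exacts [sparse_colour_cost_le_exp hr hk hE1 hp, max_two_pow_le_exp hd hr hk hE1 hp]
    _ = exp (102 * (E * d * log r)) + 1 := by
        rw [← exp_nat_mul, ← exp_add]
        push_cast
        ring_nf
    _ ≤ exp (103 * (E * d * log r)) := by
        rw [show 103 * (E * d * log r) = 102 * (E * d * log r) + E * d * log r by ring, exp_add]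
        nlinarith [add_one_le_exp (E * d * log r), one_le_exp (x := 102 * (E * d * log r))
          (by positivity)]

lemma setRamsey_le_exp_of_lt_four_mul (hs : 1 ≤ s) (hr : 3 ≤ r) (hdr : r < 4 * d)
    (hE : E * r = d * k) : setRamsey r s k ≤ exp (16 * (E * d * log r)) := by
  have r_pos : (0 : ℝ) < r := by positivity
  have r_le : (r : ℝ) ≤ 4 * d := mod_cast hdr.le
  have hrk : (r : ℝ) * k ≤ 16 * (E * d) := by
    refine le_of_mul_le_mul_right (a := (r : ℝ)) ?_ r_pos
    calc (r : ℝ) * k * r ≤ 4 * d * k * (4 * d) := by gcongr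
      _ = 16 * (E * d) * r := by linear_combination (-16 * (d : ℝ)) * hE
  calc (setRamsey r s k : ℝ) ≤ (r ^ (r * k) : ℕ) :=
        mod_cast Nat.sInf_le (hasSetColouringRamsey_pow hs (by omega) k)
    _ = exp (r * k * log r) := by
        rw [Nat.cast_pow, ← Nat.cast_mul, exp_nat_mul, exp_log r_pos]
    _ ≤ exp (16 * (E * d) * log r) := by gcongr
    _ = _ := by ring_nf

theorem setRamsey_le_exp (hs : 1 ≤ s) (hd : 0 < d) (hsd : s + d = r) (hr : 3 ≤ r)
    (hE : E * r = d * k) (hE1 : 1 ≤ E) : setRamsey r s k ≤ exp (103 * (E * d * log r)) := by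
  obtain hdr | hdr := le_or_gt (4 * d) r
  · exact setRamsey_le_exp_of_four_mul_le hd hsd hdr hr hE hE1
  · refine (setRamsey_le_exp_of_lt_four_mul hs hr hdr hE).trans (exp_le_exp.2 ?_)
    gcongr
    norm_num

end UpperBound

section LowerBound

variable {V ι κ : Type*} {r s d k n : ℕ}

section MissesCliques

variable [DecidableEq V]

/-- `M` assigns at most `d` *missing* colours to every edge, in such a way that every colour is
missing from some edge of every `k`-set. Giving each edge the colours outside `M` then produces no
monochromatic clique of size `k`. -/
structure MissesCliques (M : Sym2 V → Finset ι) (d k : ℕ) : Prop where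
  card_le : ∀ u v, u ≠ v → #(M s(u, v)) ≤ d
  exists_mem : ∀ (i : ι) (S : Finset V), #S = k → ∃ e ∈ pairs S, i ∈ M e

lemma not_hasSetColouringRamsey_of_missesCliques {M : Sym2 (Fin n) → Finset (Fin r)}
    (hM : MissesCliques M d k) (hsd : s + d = r) : ¬HasSetColouringRamsey r s k n := by
  have enlarge (e : Sym2 (Fin n)) (he : #(M e) ≤ d) : ∃ N, M e ⊆ N ∧ #N = d :=
    exists_superset_card_eq he (by rw [Fintype.card_fin]; omega)
  choose! N hMN hN using enlarge
  intro hR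
  obtain ⟨S, i, hS, hi⟩ := hR (fun u v ↦ (N s(u, v))ᶜ) (fun u v ↦ by rw [Sym2.eq_swap])
    (fun u v huv ↦ by rw [card_compl, Fintype.card_fin, hN _ (hM.card_le u v huv)]; omega)
  obtain ⟨e, he, hie⟩ := hM.exists_mem i S hS
  induction e with
  | _ u v =>
    obtain ⟨hu, hv, huv⟩ := mk_mem_pairs.1 he
    exact mem_compl.1 (hi u hu v hv huv) (hMN _ (hM.card_le u v huv) hie)

lemma hasSetColouringRamsey_mono {m : ℕ} (hnm : n ≤ m) (h : HasSetColouringRamsey r s k n) :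
    HasSetColouringRamsey r s k m := by
  intro χ hsymm hcard
  let emb := Fin.castLEEmb hnm
  obtain ⟨S, i, hS, hi⟩ := h (fun u v ↦ χ (emb u) (emb v)) (fun u v ↦ hsymm _ _)
    fun u v huv ↦ hcard _ _ (emb.injective.ne huv)
  refine ⟨S.map emb, i, (card_map _).trans hS, ?_⟩
  simp only [mem_map, forall_exists_index, and_imp, forall_apply_eq_imp_iff₂]
  exact fun u hu v hv huv ↦ hi u hu v hv (ne_of_apply_ne emb huv)

theorem exp_le_setRamsey_of_missesCliques {y : ℝ} (hs : 1 ≤ s) (hr : 2 ≤ r) (hsd : s + d = r)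
    (h : ∃ M : Sym2 (Fin ⌊exp y⌋₊) → Finset (Fin r), MissesCliques M d k) :
    exp y ≤ setRamsey r s k := by
  obtain ⟨M, hM⟩ := h
  have lt : ⌊exp y⌋₊ < setRamsey r s k := by
    by_contra! hle
    have attained : HasSetColouringRamsey r s k (setRamsey r s k) :=
      Nat.sInf_mem (s := {n | HasSetColouringRamsey r s k n}) ⟨_, hasSetColouringRamsey_pow hs hr k⟩
    exact not_hasSetColouringRamsey_of_missesCliques hM hsd
      (hasSetColouringRamsey_mono hle attained)
  calc exp y ≤ ⌊exp y⌋₊ + 1 := (Nat.lt_floor_add_one _).le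
    _ ≤ setRamsey r s k := by exact_mod_cast lt

end MissesCliques

section RandomPartitions

variable [Fintype ι]

/-- The colours `i` for which both ends of the edge lie in the same class of `φ i`. -/
def collidingColours [DecidableEq κ] (φ : ι → V → κ) (e : Sym2 V) : Finset ι :=
  {i | (e.map (φ i)).IsDiag}

lemma mem_collidingColours [DecidableEq κ] {φ : ι → V → κ} {u v : V} {i : ι} :
    i ∈ collidingColours φ s(u, v) ↔ φ i u = φ i v := by
  simp [collidingColours]

lemma card_collidingColours [DecidableEq V] [DecidableEq κ] (φ : ι → V → κ) {u v : V}
    (huv : u ≠ v) : #(collidingColours φ s(u, v)) = collisions φ {u, v} := by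
  rw [collisions_pair φ huv]
  simp [collidingColours]

lemma missesCliques_collidingColours [DecidableEq V] [Fintype κ] [DecidableEq κ] {φ : ι → V → κ}
    (hφ : ∀ u v, u ≠ v → collisions φ {u, v} ≤ d) (hk : Fintype.card κ < k) :
    MissesCliques (collidingColours φ) d k where
  card_le u v huv := (card_collidingColours φ huv).trans_le (hφ u v huv)
  exists_mem i S hS := by
    obtain ⟨u, hu, v, hv, huv, heq⟩ := exists_ne_map_eq_of_card_lt_of_maps_to
      (s := S) (t := univ) (f := φ i) (by rwa [card_univ, hS]) fun _ _ ↦ mem_univ _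
    exact ⟨s(u, v), mk_mem_pairs.2 ⟨hu, hv, huv⟩, mem_collidingColours.2 heq⟩

lemma log_one_add_sub_div_pos {δ : ℝ} (hδ : 0 < δ) : 0 < log (1 + δ) - δ / (1 + δ) := by
  have := log_lt_sub_one_of_pos (x := (1 + δ)⁻¹) (by positivity) (by simp [hδ.ne'])
  rw [log_inv] at this
  have : δ / (1 + δ) = 1 - (1 + δ)⁻¹ := by field_simp; ring
  linarith

variable [Fintype V]

lemma unifProb_exists_collisions_pair_lt_le [DecidableEq ι] [DecidableEq V] [Fintype κ]
    [DecidableEq κ] [Nonempty κ] {θ : ℝ} (hθ : 0 ≤ θ) :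
    unifProb (fun φ : ι → V → κ ↦ ∃ p ∈ (univ : Finset V).offDiag, d < collisions φ {p.1, p.2}) ≤
      Fintype.card V ^ 2 *
        exp (Fintype.card ι * ((exp θ - 1) / Fintype.card κ) - θ * (d + 1)) := by
  refine (unifProb_exists_le (x := exp (Fintype.card ι * ((exp θ - 1) / Fintype.card κ) -
    θ * (d + 1))) fun p hp ↦ ?_).trans ?_
  · have := unifProb_le_collisions_le (ι := ι) (κ := κ) {p.1, p.2} hθ (d + 1)
    rw [card_pair (mem_offDiag.1 hp).2.2, Nat.choose_self, Nat.cast_one, one_mul] at this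
    exact_mod_cast this
  · gcongr
    rw [sq, ← Nat.cast_mul, Nat.cast_le, offDiag_card, card_univ]
    exact Nat.sub_le ..

/-- Partition the vertices into `t < k` random classes for every colour, and let colours be
missing inside their classes. -/
theorem exists_missesCliques_of_sq_card_le [DecidableEq V] {δ : ℝ} (hδ : 0 < δ) {t : ℕ}
    (ht : 0 < t) (htk : t < k)
    (hιt : (1 + δ) * Fintype.card ι ≤ t * d)
    (hV : (Fintype.card V : ℝ) ^ 2 ≤ exp ((log (1 + δ) - δ / (1 + δ)) * d)) :
    ∃ M : Sym2 V → Finset ι, MissesCliques M d k := by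
  classical
  have : NeZero t := ⟨ht.ne'⟩
  have ht' : (0 : ℝ) < t := mod_cast ht
  have log_pos : 0 < log (1 + δ) := log_pos (by linarith)
  suffices h : unifProb (fun φ : ι → V → Fin t ↦
      ∃ p ∈ (univ : Finset V).offDiag, d < collisions φ {p.1, p.2}) < 1 by
    obtain ⟨φ, hφ⟩ := exists_not_of_unifProb_lt_one h
    push Not at hφ
    exact ⟨_, missesCliques_collidingColours (fun u v huv ↦ hφ (u, v) (by simpa using huv))
      (by rwa [Fintype.card_fin])⟩
  refine (unifProb_exists_collisions_pair_lt_le log_pos.le).trans_lt ?_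
  rw [Fintype.card_fin, exp_log (by positivity), add_sub_cancel_left]
  have mean_le : Fintype.card ι * (δ / t) ≤ δ / (1 + δ) * d := by
    rw [mul_div_assoc', div_mul_eq_mul_div, div_le_div_iff₀ ht' (by positivity)]
    nlinarith
  calc _ ≤ exp ((log (1 + δ) - δ / (1 + δ)) * d) * exp (Fintype.card ι * (δ / t) -
        log (1 + δ) * (d + 1)) := by gcongr
    _ < 1 := by
        rw [← exp_add, exp_lt_one_iff]
        linarith

end RandomPartitions

end LowerBound

section RandomBlocks

variable {V ι κ : Type*} [Fintype V] [DecidableEq V] [Fintype ι] [Fintype κ] {r d k : ℕ}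

/-- Group the colours into blocks of size at most `d`, and let the colours of a random block be
missing at every edge. -/
theorem exists_missesCliques_of_card_fiber_le [DecidableEq κ] [Nonempty κ] (b : ι → κ)
    (hb : ∀ a, #{i | b i = a} ≤ d)
    (hV : (Fintype.card V : ℝ) ^ k * Fintype.card κ *
      exp (1 - k.choose 2 / (2 * Fintype.card κ)) < 1) :
    ∃ M : Sym2 V → Finset ι, MissesCliques M d k := by
  suffices h : unifProb (fun ω : Sym2 V → κ ↦ ∃ p ∈ powersetCard k univ ×ˢ univ,
      (#{t ∈ pairs p.1 | ω t = p.2} : ℝ) < 1) < 1 by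
    obtain ⟨ω, hω⟩ := exists_not_of_unifProb_lt_one h
    refine ⟨fun e ↦ {i | b i = ω e}, fun u v _ ↦ hb _, fun i S hS ↦ ?_⟩
    simp only [not_exists, not_and, not_lt, Nat.one_le_cast] at hω
    have ⟨e, he⟩ := card_pos.1 (hω (S, b i) (by simp [hS]))
    obtain ⟨heS, heb⟩ := mem_filter.1 he
    exact ⟨e, heS, by simp [heb]⟩
  refine (unifProb_exists_le (x := exp (1 - k.choose 2 / (2 * Fintype.card κ))) ?_).trans_lt ?_
  · intro p hp
    have := unifProb_card_filter_lt_le (pairs p.1) p.2 1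
    rwa [card_pairs, (mem_powersetCard.1 (mem_product.1 hp).1).2] at this
  · refine lt_of_le_of_lt ?_ hV
    rw [card_product, card_powersetCard, card_univ, card_univ, Nat.cast_mul]
    gcongr
    exact_mod_cast Nat.choose_le_pow (Fintype.card V) k

lemma card_filter_div_eq_le (hd : 0 < d) (a : ℕ) : #{i : Fin r | (i : ℕ) / d = a} ≤ d := by
  calc #{i : Fin r | (i : ℕ) / d = a} ≤ #(Ico (a * d) (a * d + d)) := by
        refine card_le_card_of_injOn (↑) (fun i hi ↦ ?_) Fin.val_injective.injOn
        have := (Nat.div_eq_iff hd).1 (mem_filter.1 hi).2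
        exact mem_coe.2 (mem_Ico.2 ⟨this.1, by omega⟩)
    _ = d := by simp

theorem exists_missesCliques_of_card_le_exp (hd : 0 < d) (hdr : d ≤ r) (hr : 3 ≤ r) (hk : 2 ≤ k)
    {E : ℝ} (hE : E * r = d * k) (hlog : 32 * log r ≤ E)
    (hV : Fintype.card V ≤ exp (E / 64)) :
    ∃ M : Sym2 V → Finset (Fin r), MissesCliques M d k := by
  let q := (r - 1) / d + 1
  have hq_le : q * d ≤ 2 * r := by
    have := Nat.div_mul_le_self (r - 1) d
    rw [add_one_mul]
    omega
  have hq_le' : q ≤ r := by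
    have := Nat.div_le_self (r - 1) d
    omega
  have index_lt (i : Fin r) : (i : ℕ) / d < q :=
    Nat.lt_add_one_of_le (Nat.div_le_div_right (by omega))
  refine exists_missesCliques_of_card_fiber_le (κ := Fin q) (fun i ↦ ⟨i / d, index_lt i⟩)
    (fun a ↦ ?_) ?_
  · simpa only [Fin.ext_iff] using card_filter_div_eq_le hd a
  have hr0 : (0 : ℝ) < r := by positivity
  have hk2 : (2 : ℝ) ≤ k := mod_cast hk
  have one_le_log : 1 ≤ log r := one_le_log_of_three_le (mod_cast hr)
  have expected_ge : k * E / 16 ≤ k.choose 2 / (2 * q) := by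
    have hqd : (q : ℝ) * d ≤ 2 * r := mod_cast hq_le
    rw [div_le_div_iff₀ (by norm_num) (by positivity)]
    refine le_of_mul_le_mul_right ?_ hr0
    calc k * E * (2 * q) * r = 2 * k ^ 2 * (q * d) := by linear_combination 2 * k * q * hE
      _ ≤ 2 * (4 * k.choose 2) * (2 * r) := by
          gcongr
          exact sq_le_four_mul_choose_two hk
      _ = k.choose 2 * 16 * r := by ring
  rw [Fintype.card_fin]
  calc (Fintype.card V : ℝ) ^ k * q * exp (1 - k.choose 2 / (2 * q))
      ≤ exp (E / 64) ^ k * exp (log r) * exp (1 - k * E / 16) := by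
        rw [exp_log hr0]
        gcongr
    _ < 1 := by
        rw [← exp_nat_mul, ← exp_add, ← exp_add, exp_lt_one_iff]
        nlinarith

end RandomBlocks

section Transversal

variable {V W : Type*} [DecidableEq W]

lemma exists_subset_injOn_image_eq (g : V → W) (S : Finset V) :
    ∃ T ⊆ S, Set.InjOn g T ∧ T.image g = S.image g := by
  obtain ⟨T, hTS, hinj, himage⟩ := exists_subset_injOn_image_eq_of_surjOn S (S.image g)
    (f := g) (by rw [coe_image]; exact Set.surjOn_image g S)
  exact ⟨T, hTS, hinj, himage⟩

/-- A subset of `S` containing exactly one vertex from every nonempty fibre of `g` on `S`. -/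
noncomputable def transversal (g : V → W) (S : Finset V) : Finset V :=
  (exists_subset_injOn_image_eq g S).choose

lemma transversal_subset (g : V → W) (S : Finset V) : transversal g S ⊆ S :=
  (exists_subset_injOn_image_eq g S).choose_spec.1

lemma injOn_transversal (g : V → W) (S : Finset V) : Set.InjOn g (transversal g S) :=
  (exists_subset_injOn_image_eq g S).choose_spec.2.1

lemma card_sdiff_transversal [DecidableEq V] (g : V → W) (S : Finset V) :
    #(S \ transversal g S) = #S - #(S.image g) := by
  have image_eq : (transversal g S).image g = S.image g :=
    (exists_subset_injOn_image_eq g S).choose_spec.2.2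
  rw [card_sdiff_of_subset (transversal_subset g S), ← image_eq,
    card_image_of_injOn (injOn_transversal g S)]

variable {ι : Type*} [Fintype ι] [DecidableEq V] {d k m : ℕ} {S : Finset V}

lemma sum_card_notMem_transversal (φ : ι → V → W) (S : Finset V) :
    ∑ v ∈ S, #{i | v ∉ transversal (φ i) S} = collisions φ S := by
  simp_rw [collisions, ← card_sdiff_transversal, card_filter]
  rw [sum_comm]
  simp_rw [← card_filter, filter_notMem_eq_sdiff]

lemma exists_subset_forall_card_notMem_transversal_le (hd : 0 < d) (hm : 4 * m ≤ 3 * #S)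
    {φ : ι → V → W} (hφ : 16 * collisions φ S ≤ d * #S) :
    ∃ T ⊆ S, #T = m ∧ ∀ v ∈ T, 4 * #{i | v ∉ transversal (φ i) S} ≤ d := by
  let missed (v : V) : ℕ := #{i | v ∉ transversal (φ i) S}
  have card_often : #{v ∈ S | d < 4 * missed v} * d ≤ 4 * collisions φ S := by
    rw [← sum_card_notMem_transversal, mul_sum, ← smul_eq_mul]
    exact (card_nsmul_le_sum _ _ _ fun v hv ↦ (mem_filter.1 hv).2.le).trans
      (sum_le_sum_of_subset (filter_subset ..))
  have card_often_le : 4 * #{v ∈ S | d < 4 * missed v} ≤ #S := by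
    refine Nat.le_of_mul_le_mul_left ?_ hd
    linarith
  have := card_filter_add_card_filter_not (s := S) fun v ↦ d < 4 * missed v
  obtain ⟨T, hT, hTm⟩ :=
    exists_subset_card_eq (s := {v ∈ S | ¬d < 4 * missed v}) (n := m) (by omega)
  exact ⟨T, hT.trans (filter_subset ..), hTm, fun v hv ↦ not_lt.1 (mem_filter.1 (hT hv)).2⟩

end Transversal

section PulledBackColours

variable {V W ι : Type*} [DecidableEq W] [DecidableEq ι]
  {φ : ι → V → W} {Z : Finset (ι × Sym2 W)} {S : Finset V} {d k m e : ℕ}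

lemma le_card_filter_map_mem [DecidableEq V] {i : ι} {T : Finset V} (hinj : Set.InjOn (φ i) T)
    (h : e ≤ #(({i} ×ˢ pairs (T.image (φ i))) ∩ Z)) :
    e ≤ #{f ∈ pairs T | (i, f.map (φ i)) ∈ Z} := by
  refine h.trans (card_le_card_of_surjOn (fun f ↦ (i, f.map (φ i))) ?_)
  rintro ⟨j, g⟩ hg
  simp only [coe_inter, Set.mem_inter_iff, mem_coe, mem_product, mem_singleton,
    pairs_image hinj, mem_image] at hg
  obtain ⟨⟨rfl, f, hf, rfl⟩, hZ⟩ := hg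
  exact ⟨f, mem_coe.2 (mem_filter.2 ⟨hf, hZ⟩), rfl⟩

variable [Fintype ι]

/-- The colours missing at an edge when colour `i` is declared missing at the pairs in `Z` and at
the loops of `W`, and everything is pulled back along the maps `φ i`. -/
def pulledBackColours (φ : ι → V → W) (Z : Finset (ι × Sym2 W)) (f : Sym2 V) : Finset ι :=
  {i | (f.map (φ i)).IsDiag ∨ (i, f.map (φ i)) ∈ Z}

/-- The colours of `pulledBackColours`, except that at an edge with more than `d` of them only the
ones coming from loops are kept. -/
def cappedColours (φ : ι → V → W) (Z : Finset (ι × Sym2 W)) (d : ℕ) (f : Sym2 V) : Finset ι :=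
  if #(pulledBackColours φ Z f) ≤ d then pulledBackColours φ Z f else collidingColours φ f

lemma collidingColours_subset_cappedColours (f : Sym2 V) :
    collidingColours φ f ⊆ cappedColours φ Z d f := by
  unfold cappedColours
  split_ifs
  exacts [monotone_filter_right _ fun i _ ↦ Or.inl, subset_rfl]

lemma lt_card_pulledBackColours {f : Sym2 V} {i : ι} (hZ : (i, f.map (φ i)) ∈ Z)
    (hi : i ∉ cappedColours φ Z d f) : d < #(pulledBackColours φ Z f) := by
  by_contra! hle
  rw [cappedColours, if_pos hle] at hi
  exact hi (mem_filter.2 ⟨mem_univ _, Or.inr hZ⟩)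

variable [DecidableEq V]

/-- The images of the edges in `F` under those `φ i` whose chosen transversal of `S` contains both
ends. Different edges have different images here, so events depending on these images are
independent. -/
noncomputable def transversalImages (φ : ι → V → W) (S : Finset V) (F : Finset (Sym2 V)) :
    Finset (ι × Sym2 W) :=
  {p ∈ (univ : Finset ι) ×ˢ F | p.2 ∈ pairs (transversal (φ p.1) S)}.image
    fun p ↦ (p.1, p.2.map (φ p.1))

lemma card_transversalImages_le (φ : ι → V → W) (S : Finset V) (F : Finset (Sym2 V)) :
    #(transversalImages φ S F) ≤ Fintype.card ι * #F :=
  card_image_le.trans <| (card_filter_le ..).trans_eq <| by rw [card_product, card_univ]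

lemma card_transversalImages_inter (φ : ι → V → W) (S : Finset V) (F : Finset (Sym2 V))
    (Z : Finset (ι × Sym2 W)) :
    #(transversalImages φ S F ∩ Z) =
      ∑ f ∈ F, #{i | f ∈ pairs (transversal (φ i) S) ∧ (i, f.map (φ i)) ∈ Z} := by
  rw [transversalImages, ← filter_mem_eq_inter, filter_image, filter_filter, card_image_of_injOn,
    card_filter, sum_product_right]
  · simp_rw [card_filter]
  · rintro ⟨i, f⟩ hf ⟨j, f'⟩ hf' h
    simp only [coe_filter, mem_product, mem_univ, true_and, Set.mem_ofPred_eq, Prod.mk.injEq]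
      at hf hf' h
    obtain ⟨rfl, h⟩ := h
    rw [injOn_map_pairs (injOn_transversal (φ i) S) hf.2.1 hf'.2.1 h]

lemma lt_two_mul_card_transversal_mem {u v : V} (huv : u ≠ v)
    (hu : 4 * #{i | u ∉ transversal (φ i) S} ≤ d) (hv : 4 * #{i | v ∉ transversal (φ i) S} ≤ d)
    (h : d < #(pulledBackColours φ Z s(u, v))) :
    d < 2 * #{i | s(u, v) ∈ pairs (transversal (φ i) S) ∧ (i, s(u, v).map (φ i)) ∈ Z} := by
  let missed (w : V) : Finset ι := {i | w ∉ transversal (φ i) S}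
  let hits : Finset ι :=
    {i | s(u, v) ∈ pairs (transversal (φ i) S) ∧ (i, s(u, v).map (φ i)) ∈ Z}
  have cover : pulledBackColours φ Z s(u, v) ⊆
      (missed u ∪ missed v) ∪ hits := by
    intro i hi
    simp only [missed, hits, mem_union, mem_filter, mem_univ, true_and, mk_mem_pairs]
    by_contra! hnot
    obtain ⟨⟨hui, hvi⟩, hZ⟩ := hnot
    rcases (mem_filter.1 hi).2 with hdiag | hmem
    · exact huv (injOn_transversal (φ i) S hui hvi hdiag)
    · exact hZ ⟨hui, hvi, huv⟩ hmem
  have := (card_le_card cover).trans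
    ((card_union_le _ _).trans (Nat.add_le_add_right (card_union_le _ _) _))
  change 4 * #(missed u) ≤ d at hu
  change 4 * #(missed v) ≤ d at hv
  change d < 2 * #hits
  omega

/-- If a `k`-set `S` avoided the colour `i`, then `φ i` would be injective on `S`, and every edge
of `S` with image in `Z` would have more than `d` pulled back colours. Discarding the few vertices
of `S` outside many transversals, `Z` still contains `e` of the images, and then the transversal
images of the corresponding edges meet `Z` too often. -/
theorem missesCliques_cappedColours (hd : 0 < d) (hm : 4 * m ≤ 3 * k)
    (hpair : ∀ u v, u ≠ v → collisions φ {u, v} ≤ d)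
    (hcoll : ∀ S, #S = k → 16 * collisions φ S ≤ d * k)
    (hdense : ∀ i T, #T = m → e ≤ #(({i} ×ˢ pairs T) ∩ Z))
    (hsparse : ∀ S, #S = k → ∀ F ⊆ pairs S, #F = e → 2 * #(transversalImages φ S F ∩ Z) < d * e) :
    MissesCliques (cappedColours φ Z d) d k where
  card_le u v huv := by
    unfold cappedColours
    split_ifs with h
    exacts [h, (card_collidingColours φ huv).trans_le (hpair u v huv)]
  exists_mem i S hS := by
    by_contra! havoid
    have hinj : Set.InjOn (φ i) S := by
      intro u hu v hv heq
      by_contra huv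
      exact havoid _ (mk_mem_pairs.2 ⟨hu, hv, huv⟩)
        (collidingColours_subset_cappedColours _ (mem_collidingColours.2 heq))
    obtain ⟨T, hTS, hTm, hT⟩ := exists_subset_forall_card_notMem_transversal_le hd
      (hS.symm ▸ hm) (hS.symm ▸ hcoll S hS)
    have hinjT := hinj.mono (coe_subset.2 hTS)
    obtain ⟨F, hF, hFe⟩ := exists_subset_card_eq (le_card_filter_map_mem hinjT
      (hdense i (T.image (φ i)) (by rwa [card_image_of_injOn hinjT])))
    have hFS : F ⊆ pairs S := hF.trans ((filter_subset ..).trans (pairs_mono hTS))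
    refine (hsparse S hS F hFS hFe).not_ge ?_
    rw [card_transversalImages_inter, mul_sum, mul_comm d, ← hFe, ← smul_eq_mul]
    refine card_nsmul_le_sum _ _ _ fun f hf ↦ ?_
    have overloaded := lt_card_pulledBackColours (mem_filter.1 (hF hf)).2 (havoid f (hFS hf))
    have hfT := (mem_filter.1 (hF hf)).1
    induction f with
    | _ u v =>
      obtain ⟨hu, hv, huv⟩ := mk_mem_pairs.1 hfT
      exact (lt_two_mul_card_transversal_mem huv (hT u hu) (hT v hv) overloaded).le

end PulledBackColours

section RandomMaps

variable {V W ι : Type*} [Fintype V] [DecidableEq V] [Fintype W] [DecidableEq W] [Fintype ι]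
  {d k m e : ℕ}

lemma exists_collisions_le [Nonempty W] {θ x : ℝ} (hθ : 0 ≤ θ)
    (h : (Fintype.card V : ℝ) ^ 2 *
        exp (Fintype.card ι * ((exp θ - 1) / Fintype.card W) - θ * (d + 1)) +
      (Fintype.card V : ℝ) ^ k *
        exp (Fintype.card ι * (k.choose 2 * ((exp θ - 1) / Fintype.card W)) - θ * x) < 1) :
    ∃ φ : ι → V → W, (∀ u v, u ≠ v → collisions φ {u, v} ≤ d) ∧
      ∀ S, #S = k → (collisions φ S : ℝ) ≤ x := by
  classical
  have large_le : unifProb (fun φ : ι → V → W ↦ ∃ S ∈ powersetCard k univ, x ≤ collisions φ S) ≤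
      (Fintype.card V : ℝ) ^ k *
        exp (Fintype.card ι * (k.choose 2 * ((exp θ - 1) / Fintype.card W)) - θ * x) := by
    refine (unifProb_exists_le fun S hS ↦ ?_).trans (mul_le_mul_of_nonneg_right ?_ (exp_nonneg _))
    · have := unifProb_le_collisions_le (ι := ι) (κ := W) S hθ x
      rwa [(mem_powersetCard.1 hS).2] at this
    · rw [card_powersetCard, card_univ]
      exact_mod_cast Nat.choose_le_pow (Fintype.card V) k
  obtain ⟨φ, hpair, hlarge⟩ := exists_not_and_not_of_unifProb_add_lt_one
    ((add_le_add (unifProb_exists_collisions_pair_lt_le (d := d) hθ) large_le).trans_lt h)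
  push Not at hpair hlarge
  exact ⟨φ, fun u v huv ↦ hpair (u, v) (by simpa using huv),
    fun S hS ↦ (hlarge S (by simp [hS])).le⟩

section RandomSparsePairs

variable [DecidableEq ι] {q : ℕ} [NeZero q]

lemma unifProb_exists_card_inter_lt_le :
    unifProb (fun ω : ι × Sym2 W → Fin q ↦ ∃ p ∈ (univ : Finset ι) ×ˢ powersetCard m univ,
      #(({p.1} ×ˢ pairs p.2) ∩ ({t | ω t = 0} : Finset _)) < e) ≤
      Fintype.card ι * Fintype.card W ^ m * exp (e - m.choose 2 / (2 * q)) := by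
  refine (unifProb_exists_le fun p hp ↦ ?_).trans (mul_le_mul_of_nonneg_right ?_ (exp_nonneg _))
  · have := unifProb_card_filter_lt_le ({p.1} ×ˢ pairs p.2) (0 : Fin q) e
    rw [card_product, card_singleton, one_mul, card_pairs,
      (mem_powersetCard.1 (mem_product.1 hp).2).2, Fintype.card_fin] at this
    simpa only [inter_filter, inter_univ, Nat.cast_lt] using this
  · rw [card_product, card_powersetCard, card_univ, card_univ, Nat.cast_mul]
    gcongr
    exact_mod_cast Nat.choose_le_pow (Fintype.card W) m

lemma unifProb_exists_le_card_transversalImages_inter_le (φ : ι → V → W) :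
    unifProb (fun ω : ι × Sym2 W → Fin q ↦
      ∃ p ∈ (powersetCard k univ).sigma fun S ↦ powersetCard e (pairs S),
        d * e ≤ 2 * #(transversalImages φ p.1 p.2 ∩ ({t | ω t = 0} : Finset _))) ≤
      Fintype.card V ^ k * (k.choose 2).choose e *
        exp (6.4 * (Fintype.card ι * e) / q - d * e) := by
  refine (unifProb_exists_le fun p hp ↦ ?_).trans (mul_le_mul_of_nonneg_right ?_ (exp_nonneg _))
  · obtain ⟨S, F⟩ := p
    have hF : #F = e := (mem_powersetCard.1 (mem_sigma.1 hp).2).2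
    have card_le : (#(transversalImages φ S F) : ℝ) ≤ Fintype.card ι * e := by
      exact_mod_cast hF ▸ card_transversalImages_le φ S F
    have h := unifProb_le_card_filter_le (transversalImages φ S F) (0 : Fin q) (d * e / 2)
    rw [Fintype.card_fin, mul_div_cancel₀ _ two_ne_zero] at h
    calc _ = unifProb fun ω : ι × Sym2 W → Fin q ↦
          (d * e / 2 : ℝ) ≤ #{t ∈ transversalImages φ S F | ω t = 0} := by
          simp only [inter_filter, inter_univ, div_le_iff₀' (zero_lt_two' ℝ)]
          norm_cast
      _ ≤ _ := h.trans (by gcongr)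
  · have card_eq : #((powersetCard k (univ : Finset V)).sigma fun S ↦ powersetCard e (pairs S)) =
        (Fintype.card V).choose k * (k.choose 2).choose e := by
      rw [card_sigma, sum_congr rfl fun S hS ↦ by
        rw [card_powersetCard, card_pairs, (mem_powersetCard.1 hS).2], sum_const,
        card_powersetCard, card_univ, smul_eq_mul]
    rw [card_eq, Nat.cast_mul]
    gcongr
    exact_mod_cast Nat.choose_le_pow (Fintype.card V) k

lemma exists_card_inter_of_add_lt_one (φ : ι → V → W)
    (h : Fintype.card ι * Fintype.card W ^ m * exp (e - m.choose 2 / (2 * q)) +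
      Fintype.card V ^ k * (k.choose 2).choose e *
        exp (6.4 * (Fintype.card ι * e) / q - d * e) < 1) :
    ∃ Z : Finset (ι × Sym2 W),
      (∀ i (T : Finset W), #T = m → e ≤ #(({i} ×ˢ pairs T) ∩ Z)) ∧
      ∀ S, #S = k → ∀ F ⊆ pairs S, #F = e → 2 * #(transversalImages φ S F ∩ Z) < d * e := by
  obtain ⟨ω, hdense, hsparse⟩ := exists_not_and_not_of_unifProb_add_lt_one
    ((add_le_add unifProb_exists_card_inter_lt_le
      (unifProb_exists_le_card_transversalImages_inter_le φ)).trans_lt h)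
  push Not at hdense hsparse
  exact ⟨({t | ω t = 0} : Finset _), fun i T hT ↦ hdense (i, T) (by simp [hT]),
    fun S hS F hF hFe ↦ hsparse ⟨S, F⟩ (by simp [hS, hF, hFe])⟩

end RandomSparsePairs

end RandomMaps

section ManyColoursPerBlock

variable {V W ι : Type*} [Fintype V] [DecidableEq V] [Fintype W] [DecidableEq W] [Fintype ι]
  {r d k m e q : ℕ} {E : ℝ}

lemma exp_lt_half {x : ℝ} (hx : x ≤ -1) : exp x < 1 / 2 :=
  (exp_le_exp.2 hx).trans_lt exp_neg_one_lt_half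

lemma mul_exp_sub_one_div_le_one {c y N : ℝ} (hc : 0 ≤ c) (hN : 0 ≤ N) (h : c * exp y ≤ N) :
    c * ((exp y - 1) / N) ≤ 1 := by
  rw [mul_div_assoc']
  exact div_le_one_of_le₀ (by linarith) hN

lemma exists_collisions_le_of_card_le_exp [Nonempty W] (hk : 2 ≤ k) (hd : 0 < d)
    (hE : 2 ^ 20 ≤ E) (hV : Fintype.card V ≤ exp (E * d / 2 ^ 18))
    (hW : Fintype.card ι * (k.choose 2 * exp (E / 2 ^ 13)) ≤ Fintype.card W) :
    ∃ φ : ι → V → W, (∀ u v, u ≠ v → collisions φ {u, v} ≤ d) ∧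
      ∀ S, #S = k → 16 * collisions φ S ≤ d * k := by
  let mean : ℝ := (exp (E / 2 ^ 13) - 1) / Fintype.card W
  have mean_nonneg : 0 ≤ mean := div_nonneg (sub_nonneg.2 (one_le_exp (by positivity)))
    (Nat.cast_nonneg _)
  have mean_clique_le : Fintype.card ι * (k.choose 2 * mean) ≤ 1 := by
    rw [← mul_assoc] at hW ⊢
    exact mul_exp_sub_one_div_le_one (by positivity) (Nat.cast_nonneg _) hW
  have mean_pair_le : Fintype.card ι * mean ≤ 1 := by
    refine le_trans ?_ mean_clique_le
    gcongr
    exact le_mul_of_one_le_left mean_nonneg (mod_cast Nat.choose_pos hk)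
  have hd1 : (1 : ℝ) ≤ d := mod_cast hd
  have hk2 : (2 : ℝ) ≤ k := mod_cast hk
  have hEd : 2 ^ 20 ≤ E * d := by nlinarith
  have pair_lt : (Fintype.card V : ℝ) ^ 2 *
      exp (Fintype.card ι * mean - E / 2 ^ 13 * (d + 1)) < 1 / 2 := by
    calc _ ≤ exp (E * d / 2 ^ 18) ^ 2 * exp (1 - E / 2 ^ 13 * (d + 1)) := by gcongr
      _ < 1 / 2 := by
          rw [← exp_nat_mul, ← exp_add]
          exact exp_lt_half (by push_cast; linarith)
  have clique_lt : (Fintype.card V : ℝ) ^ k *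
      exp (Fintype.card ι * (k.choose 2 * mean) - E / 2 ^ 13 * (d * k / 16)) < 1 / 2 := by
    calc _ ≤ exp (E * d / 2 ^ 18) ^ k * exp (1 - E / 2 ^ 13 * (d * k / 16)) := by gcongr
      _ < 1 / 2 := by
          rw [← exp_nat_mul, ← exp_add]
          exact exp_lt_half (by nlinarith)
  obtain ⟨φ, hpair, hclique⟩ := exists_collisions_le (ι := ι) (W := W) (d := d) (k := k)
    (θ := E / 2 ^ 13) (by positivity) ((add_lt_add pair_lt clique_lt).trans_eq (add_halves 1))
  refine ⟨φ, hpair, fun S hS ↦ ?_⟩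
  have := hclique S hS
  rw [le_div_iff₀ (by norm_num)] at this
  rw [mul_comm]
  exact_mod_cast this

lemma le_exp_div_two_pow (hE : 2 ^ 20 ≤ E) : E ≤ exp (E / 2 ^ 15) := by
  have pow_ge : (2 ^ 5 : ℝ) ^ 5 ≤ (E / 2 ^ 15) ^ 5 := by
    gcongr
    linarith
  calc E ≤ (E / 2 ^ 15) ^ 5 * (E / 2 ^ 15) / Nat.factorial 6 := by
        norm_num [Nat.factorial] at pow_ge ⊢
        nlinarith
    _ = (E / 2 ^ 15) ^ 6 / Nat.factorial 6 := by ring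
    _ ≤ exp (E / 2 ^ 15) := pow_div_factorial_le_exp _ (by positivity) 6

lemma mul_choose_two_mul_exp_le_floor (hr : 3 ≤ r) (hk : k ≤ E * r) (hlog : 2 ^ 20 * log r ≤ E) :
    r * (k.choose 2 * exp (E / 2 ^ 13)) ≤ ⌊exp (E / 2 ^ 12)⌋₊ := by
  have one_le_log : 1 ≤ log r := one_le_log_of_three_le (mod_cast hr)
  have hr0 : (0 : ℝ) < r := by positivity
  have hE : 2 ^ 20 ≤ E := by linarith
  calc r * (k.choose 2 * exp (E / 2 ^ 13))
      ≤ r * ((exp (E / 2 ^ 15) * r) ^ 2 / 2 * exp (E / 2 ^ 13)) := by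
        gcongr
        refine (choose_two_le_sq_div_two k).trans ?_
        gcongr
        exact hk.trans (by gcongr; exact le_exp_div_two_pow hE)
    _ = exp (3 * log r + 2 * (E / 2 ^ 15) + E / 2 ^ 13) / 2 := by
        have : exp (3 * log r) = r ^ 3 := by
          rw [mul_comm, ← rpow_def_of_pos hr0]; norm_cast
        have : exp (2 * (E / 2 ^ 15)) = exp (E / 2 ^ 15) ^ 2 := by rw [← exp_nat_mul]; norm_cast
        rw [exp_add, exp_add, ‹exp (3 * log r) = _›, this]
        ring
    _ ≤ exp (E / 2 ^ 12) / 2 := by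
        gcongr
        linarith
    _ ≤ _ := (Nat.div_two_lt_floor (one_le_exp (by positivity))).le

lemma exists_le_mul_and_mul_le (hd : 0 < d) (hdr : d ≤ r) :
    ∃ q, 0 < q ∧ 32 * r ≤ q * d ∧ q * d ≤ 33 * r := by
  refine ⟨32 * r / d + 1, Nat.succ_pos _, ?_, ?_⟩ <;> rw [add_one_mul]
  · exact (Nat.lt_div_mul_add hd).le
  · have := Nat.div_mul_le_self (32 * r) d
    omega

lemma mul_mul_le_choose_two_div (hq : 0 < q) (hqd : q * d ≤ 33 * r) (hk : 4 ≤ k)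
    (hkm : k ≤ 2 * m) : (m * k * d : ℝ) ≤ 1056 * (m.choose 2 / (4 * q)) * r := by
  have hk4 : (4 : ℝ) ≤ k := mod_cast hk
  have hkm' : (k : ℝ) ≤ 2 * m := mod_cast hkm
  have : (0 : ℝ) < q := mod_cast hq
  have mul_le : (m * k : ℝ) ≤ 8 * m.choose 2 := by
    rw [Nat.cast_choose_two]
    nlinarith
  calc (m * k * d : ℝ) ≤ 8 * m.choose 2 * d := by gcongr
    _ = 8 * m.choose 2 / q * (q * d) := by field_simp
    _ ≤ 8 * m.choose 2 / q * (33 * r) :=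
        mul_le_mul_of_nonneg_left (mod_cast hqd) (by positivity)
    _ = 1056 * (m.choose 2 / (4 * q)) * r := by
        field_simp
        ring

lemma card_mul_pow_mul_exp_lt_half {X : ℝ} {N : ℕ} (hr : 3 ≤ r) (hm : 0 < m)
    (hlog : 2 ^ 20 * log r ≤ E) (hN : N ≤ exp (E / 2 ^ 12)) (hX : m * E ≤ 1056 * X) (he : e ≤ X) :
    r * N ^ m * exp (e - 2 * X) < 1 / 2 := by
  have one_le_log : 1 ≤ log r := one_le_log_of_three_le (mod_cast hr)
  have hm1 : (1 : ℝ) ≤ m := mod_cast hm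
  calc (r * N ^ m * exp (e - 2 * X) : ℝ)
      ≤ exp (log r) * exp (E / 2 ^ 12) ^ m * exp (X - 2 * X) := by
        rw [exp_log (by positivity)]
        gcongr
    _ < 1 / 2 := by
        rw [← exp_nat_mul, ← exp_add, ← exp_add]
        exact exp_lt_half (by nlinarith)

lemma choose_choose_two_le_exp (he : 0 < e) (hr : 0 < r) (hek : k ^ 2 ≤ 2 ^ 7 * 33 * r * e) :
    ((k.choose 2).choose e : ℝ) ≤ exp (e * (9 + log r)) := by
  have he0 : (0 : ℝ) < e := mod_cast he
  have hek' : (k : ℝ) ^ 2 ≤ 2 ^ 7 * 33 * r * e := mod_cast hek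
  have const_le : (2 ^ 6 * 33 : ℝ) ≤ exp 8 := by
    calc (2 ^ 6 * 33 : ℝ) ≤ 2.7 ^ 8 := by norm_num
      _ ≤ exp 1 ^ 8 := by gcongr; linarith [exp_one_gt_d9]
      _ = exp 8 := by rw [← exp_nat_mul]; norm_num
  have ratio_le : (k.choose 2 / e : ℝ) ≤ exp 8 * r := by
    rw [div_le_iff₀ he0]
    calc (k.choose 2 : ℝ) ≤ 2 ^ 6 * 33 * (r * e) := by linarith [choose_two_le_sq_div_two k]
      _ ≤ exp 8 * (r * e) := by gcongr
      _ = _ := by ring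
  calc ((k.choose 2).choose e : ℝ) ≤ (exp 1 * (k.choose 2 / e)) ^ e := by
        rw [← mul_div_assoc]
        exact choose_le_exp_one_mul_div_pow ..
    _ ≤ (exp 1 * (exp 8 * exp (log r))) ^ e := by
        rw [exp_log (mod_cast hr)]
        gcongr
    _ = exp (e * (9 + log r)) := by
        rw [← exp_add, ← exp_add, ← exp_nat_mul]
        ring_nf

lemma pow_mul_choose_mul_exp_lt_half {N : ℕ} (hr : 3 ≤ r) (hq : 0 < q) (he : 0 < e)
    (hE : E * r = d * k) (hd : 22 * log r ≤ d)
    (hN : N ≤ exp (E * d / 2 ^ 18)) (hqd : 32 * r ≤ q * d)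
    (hek : k ^ 2 * d ≤ 2 ^ 7 * 33 * r * e) :
    N ^ k * (k.choose 2).choose e * exp (6.4 * (r * e) / q - d * e) < 1 / 2 := by
  have one_le_log : 1 ≤ log r := one_le_log_of_three_le (mod_cast hr)
  have hr0 : (0 : ℝ) < r := by positivity
  have hd1 : 1 ≤ d := by exact_mod_cast (show (1 : ℝ) ≤ d by linarith)
  have mean_le : 6.4 * (r * e) / q ≤ 0.2 * (d * e : ℝ) := by
    have : (32 * r : ℝ) ≤ q * d := mod_cast hqd
    rw [div_le_iff₀ (by positivity)]
    nlinarith [(Nat.cast_nonneg e : (0 : ℝ) ≤ e)]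
  have entropy_le : e * (9 + log r) ≤ e * (10 / 22 * d) := by
    gcongr
    linarith
  have vertices_le : k * (E * d / 2 ^ 18) ≤ 0.1 * (d * e : ℝ) := by
    have : k * E ≤ 4224 * e := by
      refine le_of_mul_le_mul_right ?_ hr0
      calc k * E * r = k ^ 2 * d := by linear_combination k * hE
        _ ≤ 2 ^ 7 * 33 * r * e := mod_cast hek
        _ = 4224 * e * r := by ring
    calc k * (E * d / 2 ^ 18) = k * E * (d / 2 ^ 18) := by ring
      _ ≤ 4224 * e * (d / 2 ^ 18 : ℝ) := by gcongr
      _ ≤ 0.1 * (d * e : ℝ) := by linarith [show (0 : ℝ) ≤ d * e by positivity]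
  have le_mul : 22 ≤ (d * e : ℝ) := by
    have : (1 : ℝ) ≤ e := mod_cast he
    nlinarith
  calc (N ^ k * (k.choose 2).choose e * exp (6.4 * (r * e) / q - d * e) : ℝ)
      ≤ exp (E * d / 2 ^ 18) ^ k * exp (e * (9 + log r)) * exp (0.2 * (d * e) - d * e) := by
        gcongr
        exact choose_choose_two_le_exp he (by omega) ((Nat.le_mul_of_pos_right _ hd1).trans hek)
    _ < 1 / 2 := by
        rw [← exp_nat_mul, ← exp_add, ← exp_add]
        exact exp_lt_half (by linarith)

lemma exists_card_inter_of_card_le_exp (hr : 3 ≤ r) (hdr : d ≤ r) (hk : 4 ≤ k)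
    (hE : E * r = d * k) (hlog : 2 ^ 20 * log r ≤ E) (hd : 22 * log r ≤ d)
    (hV : Fintype.card V ≤ exp (E * d / 2 ^ 18)) (hW : Fintype.card W ≤ exp (E / 2 ^ 12))
    (hkm : k ≤ 2 * m) (φ : Fin r → V → W) :
    ∃ (e : ℕ) (Z : Finset (Fin r × Sym2 W)),
      (∀ i (T : Finset W), #T = m → e ≤ #(({i} ×ˢ pairs T) ∩ Z)) ∧
      ∀ S, #S = k → ∀ F ⊆ pairs S, #F = e → 2 * #(transversalImages φ S F ∩ Z) < d * e := by
  have one_le_log : 1 ≤ log r := one_le_log_of_three_le (mod_cast hr)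
  have hr0 : (0 : ℝ) < r := by positivity
  have hm1 : (1 : ℝ) ≤ m := by exact_mod_cast (show 1 ≤ m by omega)
  have hkm' : (k : ℝ) ≤ 2 * m := mod_cast hkm
  obtain ⟨q, hq, le_qd, qd_le⟩ := exists_le_mul_and_mul_le (r := r)
    (by exact_mod_cast (show (0 : ℝ) < d by linarith)) hdr
  have : NeZero q := ⟨hq.ne'⟩
  let X : ℝ := m.choose 2 / (4 * q)
  have mul_le : (m * k * d : ℝ) ≤ 1056 * X * r := mul_mul_le_choose_two_div hq qd_le hk hkm
  have hX : m * E ≤ 1056 * X :=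
    le_of_mul_le_mul_right ((by linear_combination m * hE : m * E * r = m * k * d).trans_le mul_le)
      hr0
  have one_le_X : 1 ≤ X := by nlinarith
  have X_le : X ≤ 2 * ⌊X⌋₊ := by linarith [Nat.div_two_lt_floor one_le_X]
  have sparse_size : (k ^ 2 * d : ℝ) ≤ 2 ^ 7 * 33 * r * ⌊X⌋₊ := by
    calc (k ^ 2 * d : ℝ) = k * k * d := by ring
      _ ≤ 2 * m * k * d := by gcongr
      _ = 2 * (m * k * d) := by ring
      _ ≤ 2 * (1056 * X * r) := by linarith
      _ ≤ 2 * (1056 * (2 * ⌊X⌋₊) * r) := by gcongr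
      _ = 2 ^ 7 * 33 * r * ⌊X⌋₊ := by ring
  have dense_lt := card_mul_pow_mul_exp_lt_half hr (by omega) hlog hW hX
    (Nat.floor_le (zero_le_one.trans one_le_X))
  have sparse_lt := pow_mul_choose_mul_exp_lt_half hr hq (Nat.floor_pos.2 one_le_X) hE hd hV
    le_qd (mod_cast sparse_size)
  have two_mul_X : 2 * X = m.choose 2 / (2 * q) := by
    simp only [X]
    field_simp
    ring
  rw [two_mul_X] at dense_lt
  refine ⟨⌊X⌋₊, exists_card_inter_of_add_lt_one (q := q) φ ?_⟩
  rw [Fintype.card_fin]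
  exact (add_lt_add dense_lt sparse_lt).trans_eq (add_halves 1)

/-- Send the vertices to random points of a smaller set for every colour, and pull back random sets
of missing pairs. -/
theorem exists_missesCliques_of_card_le_exp_mul (hr : 3 ≤ r) (hdr : d ≤ r)
    (hE : E * r = d * k) (hlog : 2 ^ 20 * log r ≤ E) (hd : 22 * log r ≤ d)
    (hV : Fintype.card V ≤ exp (E * d / 2 ^ 18)) :
    ∃ M : Sym2 V → Finset (Fin r), MissesCliques M d k := by
  have one_le_log : 1 ≤ log r := one_le_log_of_three_le (mod_cast hr)
  have hd0 : 0 < d := by exact_mod_cast (show (0 : ℝ) < d by linarith)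
  have hd1 : (1 : ℝ) ≤ d := mod_cast hd0
  have hdr' : (d : ℝ) ≤ r := mod_cast hdr
  have hE20 : 2 ^ 20 ≤ E := by linarith
  have hkE : (k : ℝ) ≤ E * r := by
    rw [hE]
    exact le_mul_of_one_le_left (Nat.cast_nonneg _) hd1
  have hk : 4 ≤ k := by
    have : (4 : ℝ) ≤ k := by nlinarith
    exact_mod_cast this
  let N := ⌊exp (E / 2 ^ 12)⌋₊
  have : NeZero N := ⟨(Nat.floor_pos.2 (one_le_exp (by positivity))).ne'⟩
  obtain ⟨φ, hpair, hclique⟩ := exists_collisions_le_of_card_le_exp (V := V) (ι := Fin r)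
    (W := Fin N) (k := k) (by omega) hd0 hE20 hV (by
      rw [Fintype.card_fin, Fintype.card_fin]
      exact mul_choose_two_mul_exp_le_floor hr hkE hlog)
  obtain ⟨e, Z, hdense, hsparse⟩ := exists_card_inter_of_card_le_exp (m := (k + 1) / 2) hr hdr hk
    hE hlog hd hV (by rw [Fintype.card_fin]; exact Nat.floor_le (exp_nonneg _)) (by omega) φ
  exact ⟨_, missesCliques_cappedColours hd0 (by omega) hpair hclique hdense hsparse⟩

end ManyColoursPerBlock

theorem exp_le_setRamsey {δ a E : ℝ} {r s d k : ℕ} (hδ : 0 < δ) (ha : 0 ≤ a)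
    (haδ : 2 ^ 21 * a ≤ log (1 + δ) - δ / (1 + δ)) (ha1 : 2 ^ 18 * a ≤ 1) (hs : 1 ≤ s) (hd : 0 < d)
    (hsd : s + d = r) (hr : 3 ≤ r) (hE : E * r = d * k) (hk : (1 + δ) * r ≤ (k - 1) * d) :
    exp (a * (E * d) / log r) ≤ setRamsey r s k := by
  have one_le_log : 1 ≤ log r := one_le_log_of_three_le (mod_cast hr)
  have log_pos : 0 < log r := zero_lt_one.trans_le one_le_log
  have hr0 : (0 : ℝ) < r := by positivity
  have hk1 : 1 < k := by
    have : (0 : ℝ) < k - 1 :=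
      pos_of_mul_pos_left ((by positivity : (0 : ℝ) < _).trans_le hk) (Nat.cast_nonneg d)
    exact_mod_cast sub_pos.1 this
  have E_nonneg : 0 ≤ E := nonneg_of_mul_nonneg_left (by rw [hE]; positivity) hr0
  have card_le {z : ℝ} (hz : a * (E * d) / log r ≤ z) :
      (Fintype.card (Fin ⌊exp (a * (E * d) / log r)⌋₊) : ℝ) ≤ exp z := by
    rw [Fintype.card_fin]
    exact (Nat.floor_le (exp_nonneg _)).trans (exp_le_exp.2 hz)
  refine exp_le_setRamsey_of_missesCliques hs (by omega) hsd ?_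
  obtain hElog | hElog := le_total E (2 ^ 20 * log r)
  · refine exists_missesCliques_of_sq_card_le hδ (Nat.sub_pos_of_lt hk1)
      (Nat.sub_lt (by omega) one_pos) (by rwa [Fintype.card_fin, Nat.cast_pred (by omega)]) ?_
    have small : a * (E * d) / log r ≤ 2 ^ 20 * a * d := by
      rw [div_le_iff₀ log_pos]
      calc a * (E * d) ≤ a * (2 ^ 20 * log r * d) := by gcongr
        _ = 2 ^ 20 * a * d * log r := by ring
    calc _ ≤ exp (2 ^ 20 * a * d) ^ 2 := by gcongr; exact card_le small
      _ = exp (2 ^ 21 * a * d) := by rw [← exp_nat_mul]; ring_nf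
      _ ≤ _ := by gcongr
  obtain hdlog | hdlog := le_total (22 * log r) d
  · refine exists_missesCliques_of_card_le_exp_mul hr (by omega) hE hElog hdlog (card_le ?_)
    calc a * (E * d) / log r ≤ a * (E * d) := div_le_self (by positivity) one_le_log
      _ ≤ E * d / 2 ^ 18 := by
          rw [le_div_iff₀' (by norm_num), ← mul_assoc]
          exact mul_le_of_le_one_left (by positivity) ha1
  · refine exists_missesCliques_of_card_le_exp hd (by omega) hr hk1 hE (by linarith) (card_le ?_)
    rw [div_le_iff₀ log_pos]
    calc a * (E * d) ≤ 1 / 2 ^ 18 * (E * (22 * log r)) := by gcongr; linarith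
      _ ≤ E / 64 * log r := by linarith [mul_nonneg E_nonneg log_pos.le]

theorem setRamsey_up_to_polylog (δ : ℝ) (hδ : 0 < δ) :
    ∃ a > (0 : ℝ), ∃ A > (0 : ℝ), ∀ r s k : ℕ, s < r → 1 ≤ s → 3 ≤ r →
      (k : ℝ) ≥ (1 + δ) / (((r : ℝ) - s) / r) + 1 →
      Real.exp (a * (((r : ℝ) - s) / r) ^ 2 * r * k / Real.log r)
          ≤ (setRamsey r s k : ℝ) ∧
        (setRamsey r s k : ℝ)
          ≤ Real.exp (A * (((r : ℝ) - s) / r) ^ 2 * r * k * Real.log r) := by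
  let a := min ((log (1 + δ) - δ / (1 + δ)) / 2 ^ 21) (1 / 2 ^ 18)
  have a_pos : 0 < a := lt_min (div_pos (log_one_add_sub_div_pos hδ) (by norm_num)) (by norm_num)
  refine ⟨a, a_pos, 103, by norm_num, fun r s k hsr hs hr hk ↦ ?_⟩
  obtain ⟨d, hd, hsd⟩ := exists_pos_add_of_lt' hsr
  have hr0 : (0 : ℝ) < r := by positivity
  have hd0 : (0 : ℝ) < d := mod_cast hd
  rw [show (r : ℝ) - s = d by rw [← hsd]; push_cast; ring] at hk ⊢
  have hkd : (1 + δ) * r ≤ (k - 1) * d := by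
    rwa [ge_iff_le, ← le_sub_iff_add_le, div_div_eq_mul_div, div_le_iff₀ hd0] at hk
  have hE : (d / r * k * r : ℝ) = d * k := by field_simp
  have hE1 : 1 ≤ (d / r * k : ℝ) := le_of_mul_le_mul_right (by nlinarith) hr0
  have exponent (c : ℝ) : c * (d / r) ^ 2 * r * k = c * (d / r * k * d) := by field_simp
  constructor
  · rw [exponent]
    refine exp_le_setRamsey hδ a_pos.le ?_ ?_ hs hd hsd hr hE hkd
    · exact (le_div_iff₀' (by norm_num)).1 (min_le_left ..)
    · exact (le_div_iff₀' (by norm_num)).1 (min_le_right ..)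
  · rw [exponent, mul_assoc]
    exact setRamsey_le_exp hs hd hsd hr hE hE1
end

section
/- For all integers r > s ≥ 1 and every integer k ≥ 2, setting ε = (r − s)/r, one has R_{r,s}(k) ≥ (ε·(k − 1)/e)^{ε·r/2}, where e is Euler's number. -/
/-!
With `m = k - 1`, let `f : Fin n → Fin r → Fin m` be a code of `n` words, any two of which differ
in at least `s` places, and give the edge `uv` a set of `s` coordinates in which `f u` and `f v`
differ. The `i`-th coordinate then separates the vertices of a clique in colour `i`, which therefore
has at most `m < k` of them. The Gilbert–Varshamov bound provides such a code as soon as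
`n * (r.choose s * m ^ s) ≤ m ^ r`, whence `m ^ (r - s) < r.choose s * setRamsey r s k`, and
`r.choose s = r.choose (r - s)` is at most `(e * r / (r - s)) ^ (r - s)`. As `setRamsey` is an
infimum in `ℕ`, which is `0` for the empty set, one also needs Ramsey's theorem to know that it is
attained.
-/

open Finset

section Ramsey

universe u

variable {ι : Type*}

/-- `N` is an upper bound for the multicolour Ramsey number of the clique sizes `κ`: whenever graphs
`G i` cover all edges of the complete graph on `V`, every set of at least `N` vertices contains, for
some `i`, a clique of `G i` with `κ i` vertices. The graphs may overlap, as set colourings require,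
and the vertex set `A` is allowed to vary so that one can restrict to neighbourhoods. -/
def IsRamseyBound (κ : ι → ℕ) (N : ℕ) : Prop :=
  ∀ (V : Type u) (G : ι → SimpleGraph V), (Pairwise fun u v => ∃ i, (G i).Adj u v) →
    ∀ A : Finset V, N ≤ #A → ∃ i, ∃ S ⊆ A, (G i).IsNClique (κ i) S

theorem isRamseyBound_zero {κ : ι → ℕ} {i : ι} (hi : κ i = 0) : IsRamseyBound κ 0 :=
  fun _ _ _ A _ => ⟨i, ∅, empty_subset A, by rw [SimpleGraph.isNClique_empty, hi]⟩

variable [Nonempty ι]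

theorem exists_le_card_filter_adj [Fintype ι] {V : Type*} [DecidableEq V]
    {G : ι → SimpleGraph V} [∀ i, DecidableRel (G i).Adj]
    (hG : Pairwise fun u v => ∃ i, (G i).Adj u v) {N : ι → ℕ} {A : Finset V} {v : V}
    (hA : ∑ i, N i ≤ #(A.erase v)) :
    ∃ i, N i ≤ #{u ∈ A | (G i).Adj v u} := by
  have hcover : A.erase v ⊆ univ.biUnion fun i => {u ∈ A | (G i).Adj v u} := by
    intro u hu
    obtain ⟨huv, huA⟩ := mem_erase.1 hu
    obtain ⟨i, hi⟩ := hG huv.symm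
    exact mem_biUnion.2 ⟨i, mem_univ i, mem_filter.2 ⟨huA, hi⟩⟩
  obtain ⟨i, -, hi⟩ := exists_le_of_sum_le univ_nonempty
    (hA.trans ((card_le_card hcover).trans card_biUnion_le))
  exact ⟨i, hi⟩

theorem IsRamseyBound.of_update [Fintype ι] [DecidableEq ι] {κ N : ι → ℕ} (hκ : ∀ i, κ i ≠ 0)
    (hN : ∀ i, IsRamseyBound.{u} (Function.update κ i (κ i - 1)) (N i)) :
    IsRamseyBound.{u} κ (∑ i, N i + 1) := by
  classical
  intro V G hG A hA
  obtain ⟨v, hv⟩ : A.Nonempty := card_pos.1 (Nat.zero_lt_of_lt hA)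
  obtain ⟨i, hi⟩ := exists_le_card_filter_adj (N := N) (A := A) (v := v) hG
    (by rw [card_erase_of_mem hv]; exact Nat.le_sub_one_of_lt hA)
  obtain ⟨j, S, hSA, hS⟩ := hN i V G hG _ hi
  have hSA' : S ⊆ A := hSA.trans (filter_subset _ A)
  obtain rfl | hji := eq_or_ne j i
  · rw [Function.update_self] at hS
    have hclique := hS.insert fun u hu => (mem_filter.1 (hSA hu)).2
    rw [Nat.sub_one_add_one (hκ j)] at hclique
    exact ⟨j, insert v S, insert_subset hv hSA', hclique⟩
  · rw [Function.update_of_ne hji] at hS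
    exact ⟨j, S, hSA', hS⟩

theorem exists_isRamseyBound [Finite ι] (κ : ι → ℕ) : ∃ N, IsRamseyBound.{u} κ N := by
  classical
  have := Fintype.ofFinite ι
  induction hsum : ∑ i, κ i generalizing κ with
  | zero =>
    obtain ⟨i⟩ := ‹Nonempty ι›
    exact ⟨0, isRamseyBound_zero (sum_eq_zero_iff.1 hsum i (mem_univ i))⟩
  | succ t ih =>
    by_cases hκ : ∃ i, κ i = 0
    · obtain ⟨i, hi⟩ := hκ
      exact ⟨0, isRamseyBound_zero hi⟩
    push Not at hκ
    have hsum_update (i : ι) : ∑ j, Function.update κ i (κ i - 1) j = t := by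
      have := hκ i
      have := add_sum_erase univ κ (mem_univ i)
      rw [sum_update_of_mem (mem_univ i), sdiff_singleton_eq_erase]
      lia
    choose N hN using fun i => ih _ (hsum_update i)
    exact ⟨_, .of_update hκ hN⟩

end Ramsey

section GilbertVarshamov

theorem exists_pairwise_of_mul_le_card {α : Type*} [Fintype α] {R : α → α → Prop} [DecidableRel R]
    [Std.Symm R] {D : ℕ} (hD : 0 < D) (hbad : ∀ a, #{b | ¬R a b} ≤ D) {n : ℕ}
    (hn : n * D ≤ Fintype.card α) : ∃ f : Fin n → α, Pairwise fun u v => R (f u) (f v) := by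
  classical
  induction n with
  | zero => exact ⟨Fin.elim0, fun u => u.elim0⟩
  | succ n ih =>
    rw [add_one_mul] at hn
    obtain ⟨f, hf⟩ := ih (by lia)
    have hcard : #(univ.biUnion fun u => {b | ¬R (f u) b}) < #(univ : Finset α) :=
      calc #(univ.biUnion fun u => {b | ¬R (f u) b})
          ≤ #(univ : Finset (Fin n)) * D := card_biUnion_le_card_mul _ _ _ fun u _ => hbad (f u)
        _ = n * D := by rw [card_fin]
        _ < #(univ : Finset α) := by rw [card_univ]; lia
    obtain ⟨a, -, ha⟩ := exists_mem_notMem_of_card_lt_card hcard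
    have hfa (u : Fin n) : R (f u) a := by
      by_contra hu
      exact ha (mem_biUnion.2 ⟨u, mem_univ u, mem_filter.2 ⟨mem_univ a, hu⟩⟩)
    exact ⟨Fin.cons a f, pairwise_fin_succ_iff.2 ⟨hfa, fun u => symm (hfa u), hf⟩⟩

variable {ι α : Type*} [Fintype ι] [Fintype α] [DecidableEq α]

theorem card_hammingDist_le_le [DecidableEq ι] {t : ℕ} (ht : t ≤ Fintype.card ι) (c : ι → α) :
    #{w | hammingDist c w ≤ t} ≤ (Fintype.card ι).choose t * Fintype.card α ^ t := by
  let box (T : Finset ι) : Finset (ι → α) :=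
    Fintype.piFinset fun i => if i ∈ T then univ else {c i}
  have hcard_box (T : Finset ι) : #(box T) = Fintype.card α ^ #T := by
    simp only [box, Fintype.card_piFinset, apply_ite card, card_univ, card_singleton, prod_ite_mem,
      univ_inter, prod_const]
  have hcover : ({w | hammingDist c w ≤ t} : Finset (ι → α)) ⊆
      (powersetCard t univ).biUnion box := by
    intro w hw
    obtain ⟨T, hdiff, hT⟩ := exists_superset_card_eq (mem_filter.1 hw).2 ht
    refine mem_biUnion.2 ⟨T, mem_powersetCard_univ.2 hT, Fintype.mem_piFinset.2 fun i => ?_⟩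
    split_ifs with hi
    · exact mem_univ _
    · rw [mem_singleton]
      by_contra hne
      exact hi (hdiff (mem_filter.2 ⟨mem_univ i, Ne.symm hne⟩))
  calc #{w | hammingDist c w ≤ t}
      ≤ #((powersetCard t univ).biUnion box) := card_le_card hcover
    _ ≤ #(powersetCard t (univ : Finset ι)) * Fintype.card α ^ t :=
        card_biUnion_le_card_mul _ _ _ fun T hT => by
          rw [hcard_box, mem_powersetCard_univ.1 hT]
    _ = (Fintype.card ι).choose t * Fintype.card α ^ t := by rw [card_powersetCard, card_univ]

theorem exists_pairwise_lt_hammingDist [Nonempty α] {t n : ℕ} (ht : t ≤ Fintype.card ι)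
    (hn : n * ((Fintype.card ι).choose t * Fintype.card α ^ t) ≤
      Fintype.card α ^ Fintype.card ι) :
    ∃ f : Fin n → ι → α, Pairwise fun u v => t < hammingDist (f u) (f v) := by
  classical
  let far (v w : ι → α) : Prop := t < hammingDist v w
  have : DecidableRel far := fun _ _ => Nat.decLt _ _
  have : Std.Symm far := ⟨fun v w h => h.trans_eq (hammingDist_comm v w)⟩
  refine exists_pairwise_of_mul_le_card (R := far) ?_ (fun c => ?_) (by rwa [Fintype.card_fun])
  · exact Nat.mul_pos (Nat.choose_pos ht) (pow_pos Fintype.card_pos t)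
  · simpa only [far, not_lt] using card_hammingDist_le_le ht c

end GilbertVarshamov

theorem choose_le_exp_one_mul_div_pow_s2 (r d : ℕ) :
    (r.choose d : ℝ) ≤ (Real.exp 1 * r / d) ^ d := by
  obtain rfl | hd := eq_or_ne d 0
  · simp
  have : (d : ℝ) ≠ 0 := Nat.cast_ne_zero.2 hd
  calc (r.choose d : ℝ)
      ≤ r ^ d / d.factorial := Nat.choose_le_pow_div d r
    _ = (r / d : ℝ) ^ d * (d ^ d / d.factorial) := by rw [div_pow]; field_simp
    _ ≤ (r / d : ℝ) ^ d * Real.exp d := by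
        gcongr
        exact Real.pow_div_factorial_le_exp _ d.cast_nonneg d
    _ = (Real.exp 1 * r / d) ^ d := by rw [← Real.exp_one_pow, ← mul_pow]; ring

variable {r s k n : ℕ}

theorem exists_hasSetColouringRamsey (hsr : s ≤ r) (hs : 1 ≤ s) (k : ℕ) :
    ∃ n, HasSetColouringRamsey r s k n := by
  have : NeZero r := ⟨by lia⟩
  obtain ⟨N, hN⟩ := exists_isRamseyBound fun _ : Fin r => k
  refine ⟨N, fun χ hsymm hcard => ?_⟩
  let G (i : Fin r) : SimpleGraph (Fin N) := .fromRel fun u v => i ∈ χ u v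
  have hG : Pairwise fun u v => ∃ i, (G i).Adj u v := by
    intro u v huv
    obtain ⟨i, hi⟩ : (χ u v).Nonempty := card_pos.1 (by rwa [hcard u v huv])
    exact ⟨i, huv, .inl hi⟩
  obtain ⟨i, S, -, hS⟩ := hN (Fin N) G hG univ (card_fin N).ge
  refine ⟨S, i, hS.card_eq, fun u hu v hv huv => ?_⟩
  obtain h | h := (hS.isClique hu hv huv).2
  · exact h
  · rwa [hsymm]

theorem hasSetColouringRamsey_setRamsey (hsr : s ≤ r) (hs : 1 ≤ s) :
    HasSetColouringRamsey r s k (setRamsey r s k) :=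
  Nat.sInf_mem (exists_hasSetColouringRamsey hsr hs k)

theorem HasSetColouringRamsey.exists_of_le_card (h : HasSetColouringRamsey r s k n)
    {χ : Fin n → Fin n → Finset (Fin r)} (hsymm : ∀ u v, χ u v = χ v u)
    (hcard : ∀ u v, u ≠ v → s ≤ #(χ u v)) :
    ∃ (S : Finset (Fin n)) (i : Fin r), #S = k ∧ ∀ u ∈ S, ∀ v ∈ S, u ≠ v → i ∈ χ u v := by
  choose! g hg_subset hg_card using fun (C : Finset (Fin r)) (hC : s ≤ #C) =>
    exists_subset_card_eq hC
  obtain ⟨S, i, hS, hi⟩ := h (fun u v => g (χ u v)) (fun u v => by rw [hsymm])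
    fun u v huv => hg_card _ (hcard u v huv)
  exact ⟨S, i, hS, fun u hu v hv huv => hg_subset _ (hcard u v huv) (hi u hu v hv huv)⟩

theorem HasSetColouringRamsey.le (h : HasSetColouringRamsey r s k n) (hsr : s ≤ r) : k ≤ n := by
  obtain ⟨S, -, hS, -⟩ := h.exists_of_le_card (χ := fun _ _ => univ) (fun _ _ => rfl)
    fun _ _ _ => by rwa [card_fin]
  exact hS ▸ card_finset_fin_le S

theorem not_hasSetColouringRamsey_of_hammingDist {m : ℕ} (hmk : m < k) {f : Fin n → Fin r → Fin m}
    (hf : Pairwise fun u v => s ≤ hammingDist (f u) (f v)) : ¬HasSetColouringRamsey r s k n := by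
  intro h
  obtain ⟨S, i, hS, hi⟩ := h.exists_of_le_card (χ := fun u v => {i | f u i ≠ f v i})
    (fun u v => by simp only [ne_comm]) fun u v huv => hf huv
  have hinj : Set.InjOn (fun u => f u i) S := fun u hu v hv huv => by
    by_contra hne
    exact (mem_filter.1 (hi u hu v hv hne)).2 huv
  have hle : #S ≤ #(univ : Finset (Fin m)) :=
    card_le_card_of_injOn _ (fun _ _ => mem_univ _) hinj
  rw [hS, card_fin] at hle
  exact hmk.not_ge hle

theorem pow_lt_choose_mul_setRamsey (hsr : s ≤ r) (hs : 1 ≤ s) (hk : 2 ≤ k) :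
    (k - 1) ^ (r - s) < r.choose s * setRamsey r s k := by
  obtain ⟨m, rfl⟩ : ∃ m, k = m + 1 := ⟨k - 1, by lia⟩
  have : NeZero m := ⟨by lia⟩
  by_contra! hle
  rw [Nat.add_sub_cancel] at hle
  have hcode : setRamsey r s (m + 1) * (r.choose s * m ^ s) ≤ m ^ r :=
    calc setRamsey r s (m + 1) * (r.choose s * m ^ s)
        = r.choose s * setRamsey r s (m + 1) * m ^ s := by ring
      _ ≤ m ^ (r - s) * m ^ s := by gcongr
      _ = m ^ r := pow_sub_mul_pow m hsr
  obtain ⟨f, hf⟩ := exists_pairwise_lt_hammingDist (ι := Fin r) (α := Fin m) (t := s)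
    (by rwa [Fintype.card_fin]) (by simpa only [Fintype.card_fin] using hcode)
  exact not_hasSetColouringRamsey_of_hammingDist m.lt_succ_self (fun u v huv => (hf huv).le)
    (hasSetColouringRamsey_setRamsey hsr hs)

theorem pow_lt_setRamsey (hsr : s < r) (hs : 1 ≤ s) (hk : 2 ≤ k) :
    (((r : ℝ) - s) / r * ((k : ℝ) - 1) / Real.exp 1) ^ (r - s) < setRamsey r s k := by
  have hr : (0 : ℝ) < r := Nat.cast_pos.2 (by lia)
  have hd : (0 : ℝ) < r - s := sub_pos.2 (Nat.cast_lt.2 hsr)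
  have hchoose : (r.choose s : ℝ) ≤ (Real.exp 1 * r / (r - s)) ^ (r - s) := by
    rw [← Nat.choose_symm hsr.le, ← Nat.cast_sub hsr.le]
    exact choose_le_exp_one_mul_div_pow_s2 r (r - s)
  have hlt : ((k : ℝ) - 1) ^ (r - s) < r.choose s * setRamsey r s k := by
    rw [← Nat.cast_pred (by lia)]
    exact_mod_cast pow_lt_choose_mul_setRamsey hsr.le hs hk
  have hbase : (k : ℝ) - 1 =
      Real.exp 1 * r / (r - s) * ((r - s) / r * (k - 1) / Real.exp 1) := by
    field_simp
  refine lt_of_mul_lt_mul_left ?_ (by positivity : 0 ≤ (Real.exp 1 * r / ((r : ℝ) - s)) ^ (r - s))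
  calc (Real.exp 1 * r / ((r : ℝ) - s)) ^ (r - s) *
        (((r : ℝ) - s) / r * ((k : ℝ) - 1) / Real.exp 1) ^ (r - s)
      = ((k : ℝ) - 1) ^ (r - s) := by rw [← mul_pow, ← hbase]
    _ < r.choose s * setRamsey r s k := hlt
    _ ≤ (Real.exp 1 * r / (r - s)) ^ (r - s) * setRamsey r s k := by gcongr

theorem setRamsey_simple_lower_bound_general (hsr : s < r) (hs : 1 ≤ s) (hk : 2 ≤ k) {x : ℝ}
    (hx : 0 ≤ x) (hxd : x ≤ r - s) :
    (((r : ℝ) - s) / r * ((k : ℝ) - 1) / Real.exp 1) ^ x ≤ setRamsey r s k := by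
  have hd : (0 : ℝ) ≤ r - s := hx.trans hxd
  have hk' : (0 : ℝ) ≤ k - 1 := sub_nonneg.2 (Nat.one_le_cast.2 (by lia))
  have hone : 1 ≤ setRamsey r s k :=
    le_trans (by lia) ((hasSetColouringRamsey_setRamsey hsr.le hs).le hsr.le)
  obtain hB | hB := le_total (((r : ℝ) - s) / r * ((k : ℝ) - 1) / Real.exp 1) 1
  · exact (Real.rpow_le_one (by positivity) hB hx).trans (Nat.one_le_cast.2 hone)
  · calc (((r : ℝ) - s) / r * ((k : ℝ) - 1) / Real.exp 1) ^ x
        ≤ (((r : ℝ) - s) / r * ((k : ℝ) - 1) / Real.exp 1) ^ ((r : ℝ) - s) :=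
          Real.rpow_le_rpow_of_exponent_le hB hxd
      _ = (((r : ℝ) - s) / r * ((k : ℝ) - 1) / Real.exp 1) ^ (r - s) := by
          rw [← Nat.cast_sub hsr.le, Real.rpow_natCast]
      _ ≤ setRamsey r s k := (pow_lt_setRamsey hsr hs hk).le

theorem setRamsey_simple_lower_bound (r s k : ℕ) (hsr : s < r) (hs : 1 ≤ s)
    (hk : 2 ≤ k) :
    (setRamsey r s k : ℝ) ≥
      ((((r : ℝ) - s) / r) * ((k : ℝ) - 1) / Real.exp 1) ^
        ((((r : ℝ) - s) / r) * r / 2) := by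
  have hd : (0 : ℝ) < r - s := sub_pos.2 (Nat.cast_lt.2 hsr)
  rw [div_mul_cancel₀ _ (Nat.cast_ne_zero.2 (Nat.ne_zero_of_lt hsr))]
  exact setRamsey_simple_lower_bound_general hsr hs hk (by positivity) (half_le_self hd.le)
end
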